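/- Let n ≥ 1, 1 < p < ∞, 1 ≤ q ≤ ∞, 0 ≤ α < n(p-1), let M ∈ ℕ and let s be a real number with 1 + 1/p < s < (n+α)/p and s < M. Let G : ℝ → ℝ be twice continuously differentiable. If for every f in the weighted Besov space B^s_{p,q}(ℝ^n, |·|^α) (defined via the ball-means-of-differences norm of order M) the composition G ∘ f again belongs to B^s_{p,q}(ℝ^n, |·|^α), then there exists a constant c ∈ ℝ such that G(t) = c t for all t ∈ ℝ. -/

import Mathlib

/-!
The operator `f ↦ G ∘ f` is tested on one lacunary function. Let `κ = (n + α) / p`, which is the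
degree of homogeneity of the weighted `L^p` norm under dilations, and let `φ` be a smooth bump
supported in `1 < ‖y‖ < 3` which equals the linear function `y i0 - 2` on a small ball. The test
function is `f = ∑ⱼ rⱼ ^ (-β) φ(x / rⱼ)` with `rⱼ = ρ ^ j`, a sum of bumps with disjoint supports and
amplitudes `aⱼ = rⱼ ^ (-β)` tending to infinity. By scaling (`lacunary_ballMeans`) it lies in
`B^s_{p,q}` as soon as `0 < β < κ - s`. The condition `α < n (p - 1)` controls the differences of a
single bump with large steps (`profile_bound`).

Suppose that `g = G ∘ f` has finite Besov norm. Restricting the norm to differences of `g` around the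
`j`-th bump (`rescaled_lower`) gives two consequences as `j → ∞`.

* If some `M`-th difference of `G` is nonzero, then it reappears in `g` on a slab of relative width
  `1 / aⱼ` for steps of relative size `1 / aⱼ`. This forces `rⱼ ^ (κ - s) * aⱼ ^ (s - 1 / p)` to be
  bounded, which fails when `β (s - 1 / p) > κ - s`. Since `s - 1 / p > 1`, such a `β < κ - s` exists
  (`nonpolynomial_contradiction`). Hence all `M`-th differences of `G` vanish, and `G` is a polynomial
  (`exists_polynomial_of_fwdDiff`).
* If this polynomial has degree at least `2`, then differences meeting the bump in one point only are
  of size `aⱼ ^ 2`. This forces `rⱼ ^ (κ - s) * aⱼ ^ 2` to be bounded, which fails when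
  `2 β > κ - s` (`quadratic_contradiction`).

So `G` is affine, and `G 0 = 0` because nonzero constants do not lie in the weighted `L^p` space.
-/


open MeasureTheory ENNReal Filter

noncomputable section

/-- Weighted `L^p` "norm" with power weight `|x|^α`, for `ℝ≥0∞`-valued functions. -/
noncomputable def wLpE (n : ℕ) (p α : ℝ) (F : EuclideanSpace ℝ (Fin n) → ℝ≥0∞) : ℝ≥0∞ :=
  (∫⁻ x, F x ^ p * (‖x‖₊ : ℝ≥0∞) ^ α) ^ (1 / p)

/-- Weighted `L^p` norm `(∫ |f(x)|^p |x|^α dx)^(1/p)`. -/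
noncomputable def wLp (n : ℕ) (p α : ℝ) (f : EuclideanSpace ℝ (Fin n) → ℝ) : ℝ≥0∞ :=
  wLpE n p α (fun x => (‖f x‖₊ : ℝ≥0∞))

/-- Iterated difference `Δ_h^M f (x) = ∑_{i=0}^M (-1)^(M-i) C(M,i) f (x + i h)`. -/
def iterDiff (n M : ℕ) (f : EuclideanSpace ℝ (Fin n) → ℝ) (h x : EuclideanSpace ℝ (Fin n)) : ℝ :=
  ∑ i ∈ Finset.range (M + 1), (-1 : ℝ) ^ (M - i) * (M.choose i : ℝ) * f (x + (i : ℝ) • h)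

/-- Ball means of differences `d_t^M f (x) = ∫_{|h| ≤ 1} |Δ_{t h}^M f (x)| dh`. -/
noncomputable def ballMeans (n M : ℕ) (f : EuclideanSpace ℝ (Fin n) → ℝ) (t : ℝ)
    (x : EuclideanSpace ℝ (Fin n)) : ℝ≥0∞ :=
  ∫⁻ h in {h : EuclideanSpace ℝ (Fin n) | ‖h‖ ≤ 1}, (‖iterDiff n M f (t • h) x‖₊ : ℝ≥0∞)

/-- The weighted Besov norm defined via ball means of differences of order `M`. -/
noncomputable def besovNorm (n : ℕ) (p α s : ℝ) (q : ℝ≥0∞) (M : ℕ)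
    (f : EuclideanSpace ℝ (Fin n) → ℝ) : ℝ≥0∞ :=
  wLp n p α f +
    if q = ∞ then
      ⨆ t ∈ Set.Ioo (0 : ℝ) 1, ENNReal.ofReal (t ^ (-s)) * wLpE n p α (ballMeans n M f t)
    else
      (∫⁻ t in Set.Ioo (0 : ℝ) 1,
          ENNReal.ofReal (t ^ (-(s * q.toReal))) * wLpE n p α (ballMeans n M f t) ^ q.toReal *
            ENNReal.ofReal t⁻¹) ^ (1 / q.toReal)

/-- Membership in the weighted Besov space `B^s_{p,q}(ℝ^n, |·|^α)`. -/
def MemBesov (n : ℕ) (p α s : ℝ) (q : ℝ≥0∞) (M : ℕ)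
    (f : EuclideanSpace ℝ (Fin n) → ℝ) : Prop :=
  Measurable f ∧ besovNorm n p α s q M f < ∞

open scoped Topology

/-! ### Finite differences and the profile -/

lemma iterDiff_eq_fwdDiff (n M : ℕ) (f : EuclideanSpace ℝ (Fin n) → ℝ)
    (h x : EuclideanSpace ℝ (Fin n)) : iterDiff n M f h x = (fwdDiff h)^[M] f x := by
  rw [fwdDiff_iter_eq_sum_shift]
  unfold iterDiff
  refine Finset.sum_congr rfl fun i _ => ?_
  simp only [zsmul_eq_mul, Int.cast_mul, Int.cast_pow, Int.cast_neg, Int.cast_one, Int.cast_natCast,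
    Nat.cast_smul_eq_nsmul]

/-- The Newton forward difference formula: a function with vanishing `M`-th differences of step `τ`
agrees with a polynomial along each arithmetic progression of step `τ`. -/
lemma newton_progression {G : ℝ → ℝ} {M : ℕ} (y τ : ℝ) (hτ : 0 < τ)
    (h : ∀ x, (fwdDiff τ)^[M] G x = 0) :
    ∃ P : Polynomial ℝ, ∀ k : ℕ, G (y + k * τ) = P.eval (y + k * τ) := by
  refine ⟨∑ i ∈ Finset.range M, Polynomial.C ((fwdDiff τ)^[i] G y / (i.factorial : ℝ)) *
    (descPochhammer ℝ i).comp (Polynomial.C τ⁻¹ * (Polynomial.X - Polynomial.C y)), fun k => ?_⟩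
  have hz : ∀ i, M ≤ i → (fwdDiff τ)^[i] G y = 0 := by
    intro i hi
    obtain ⟨d, rfl⟩ := Nat.exists_eq_add_of_le hi
    have h0 : (fwdDiff τ)^[M] G = fun _ => 0 := funext h
    rw [add_comm, Function.iterate_add_apply, h0]
    clear hi
    induction d with
    | zero => rfl
    | succ d ih =>
      rw [Function.iterate_succ_apply, fwdDiff_const]
      exact ih
  have hN := shift_eq_sum_fwdDiff_iter τ G k y
  rw [nsmul_eq_mul] at hN
  rw [hN, Polynomial.eval_finsetSum]
  have hev : ∀ i, Polynomial.eval (y + k * τ) (Polynomial.C ((fwdDiff τ)^[i] G y / (i.factorial : ℝ)) *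
      (descPochhammer ℝ i).comp (Polynomial.C τ⁻¹ * (Polynomial.X - Polynomial.C y)))
      = k.choose i • (fwdDiff τ)^[i] G y := by
    intro i
    have h1 : τ⁻¹ * (y + k * τ - y) = (k : ℝ) := by field_simp; ring
    simp only [Polynomial.eval_mul, Polynomial.eval_C, Polynomial.eval_comp, Polynomial.eval_sub,
      Polynomial.eval_X, h1, descPochhammer_eval_eq_descFactorial, nsmul_eq_mul]
    rw [Nat.descFactorial_eq_factorial_mul_choose]
    have : (i.factorial : ℝ) ≠ 0 := by exact_mod_cast i.factorial_ne_zero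
    push_cast
    field_simp
  simp_rw [hev]
  rcases le_total (k + 1) M with hkM | hkM
  · refine Finset.sum_subset (Finset.range_mono hkM) fun i _ hi => ?_
    rw [Nat.choose_eq_zero_of_lt (by simpa using hi), zero_smul]
  · symm
    refine Finset.sum_subset (Finset.range_mono hkM) fun i _ hi => ?_
    rw [hz i (by simpa using hi), smul_zero]

/-- A continuous function with vanishing `M`-th differences of all steps is a polynomial: the
Newton polynomials for the steps `1` and `1 / d` agree at the natural numbers, hence coincide, which
determines the function on `ℚ`. -/
theorem exists_polynomial_of_fwdDiff {G : ℝ → ℝ} (hG : Continuous G) {M : ℕ}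
    (h : ∀ τ, 0 < τ → ∀ x, (fwdDiff τ)^[M] G x = 0) :
    ∃ P : Polynomial ℝ, ∀ t, G t = P.eval t := by
  obtain ⟨P, hP⟩ := newton_progression 0 1 one_pos (h 1 one_pos)
  refine ⟨P, fun t => ?_⟩
  refine congrFun (Continuous.ext_on Rat.denseRange_cast hG P.continuous ?_) t
  rintro _ ⟨z, rfl⟩
  have hd : (0 : ℝ) < z.den := by exact_mod_cast z.den_pos
  obtain ⟨Q, hQ⟩ := newton_progression (-(z.num.natAbs : ℝ)) (1 / z.den) (by positivity)
    (h _ (by positivity))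
  have hPQ : Q = P := by
    refine Polynomial.eq_of_infinite_eval_eq Q P ?_
    refine (Set.infinite_range_of_injective (f := fun k : ℕ => (k : ℝ)) Nat.cast_injective).mono ?_
    rintro _ ⟨k, rfl⟩
    have h1 := hP k
    have h2 := hQ ((z.num.natAbs + k) * z.den)
    have h3 : -(z.num.natAbs : ℝ) + (((z.num.natAbs + k) * z.den : ℕ) : ℝ) * (1 / z.den) = k := by
      push_cast; field_simp; ring
    rw [h3] at h2
    simp only [zero_add, mul_one] at h1
    exact h2.symm.trans h1
  obtain ⟨k, hk⟩ : ∃ k : ℕ, (k : ℤ) = z.num + z.num.natAbs * z.den := by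
    refine ⟨(z.num + z.num.natAbs * z.den).toNat, Int.toNat_of_nonneg ?_⟩
    have := z.den_pos
    have h2 : (1 : ℤ) ≤ z.den := by exact_mod_cast this
    nlinarith [neg_abs_le z.num, abs_nonneg z.num, Int.natCast_natAbs z.num]
  have h4 : -(z.num.natAbs : ℝ) + (k : ℝ) * (1 / z.den) = (z : ℝ) := by
    have h5 : ((k : ℤ) : ℝ) = ((z.num + z.num.natAbs * z.den : ℤ) : ℝ) := by rw [hk]
    have : (k : ℝ) = z.num + z.num.natAbs * z.den := by
      simpa only [Int.cast_add, Int.cast_mul, Int.cast_natCast] using h5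
    rw [this]
    conv_rhs => rw [Rat.cast_def]
    field_simp; ring
  have := hQ k
  rw [h4, hPQ] at this
  exact this

/-- Smooth compactly supported functions have `M`-th differences of size `O(‖h‖ ^ M)`. The target
space is quantified inside because the induction passes from `g` to its derivative. -/
lemma fwdDiff_bound {E : Type} [NormedAddCommGroup E] [NormedSpace ℝ E] (M : ℕ) :
    ∀ (F : Type) [NormedAddCommGroup F] [NormedSpace ℝ F] (g : E → F),
      ContDiff ℝ (⊤ : ℕ∞) g → HasCompactSupport g →
      ∃ C : ℝ, 0 ≤ C ∧ ∀ h x, ‖(fwdDiff h)^[M] g x‖ ≤ C * ‖h‖ ^ M := by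
  induction M with
  | zero =>
    intro F _ _ g hg hc
    obtain ⟨C, hC⟩ := hc.exists_bound_of_continuous hg.continuous
    exact ⟨C, (norm_nonneg _).trans (hC 0), fun h x => by simpa using hC x⟩
  | succ M ih =>
    intro F _ _ g hg hc
    obtain ⟨C, hC0, hC⟩ := ih (E →L[ℝ] F) (fderiv ℝ g)
      (hg.fderiv_right (m := (⊤ : ℕ∞)) (by simp)) (hc.fderiv ℝ)
    refine ⟨C, hC0, fun h x => ?_⟩
    have hgd : Differentiable ℝ g := hg.differentiable (by simp)
    have hd : ∀ z, HasFDerivAt ((fwdDiff h)^[M] g) ((fwdDiff h)^[M] (fderiv ℝ g) z) z := by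
      have : ∀ m : ℕ, ∀ z, HasFDerivAt ((fwdDiff h)^[m] g) ((fwdDiff h)^[m] (fderiv ℝ g) z) z := by
        intro m
        induction m with
        | zero => intro z; exact (hgd z).hasFDerivAt
        | succ m ihm =>
          intro z
          simp only [Function.iterate_succ_apply']
          exact ((hasFDerivAt_comp_add_right h).2 (ihm (z + h))).sub (ihm z)
      exact this M
    have := convex_univ.norm_image_sub_le_of_norm_hasFDerivWithin_le (𝕜 := ℝ)
      (fun z _ => (hd z).hasFDerivWithinAt) (fun z _ => hC h z) (Set.mem_univ x)
      (Set.mem_univ (x + h))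
    rw [Function.iterate_succ_apply']
    simp only [add_sub_cancel_left] at this
    calc ‖fwdDiff h ((fwdDiff h)^[M] g) x‖ ≤ C * ‖h‖ ^ M * ‖h‖ := this
      _ = C * ‖h‖ ^ (M + 1) := by ring

/-- The profile: supported in the unit ball around `2 e₀` and equal to `y ↦ y₀ - 2` near `2 e₀`. -/
lemma exists_profile (n : ℕ) (i0 : Fin n) :
    ∃ φ : EuclideanSpace ℝ (Fin n) → ℝ, ContDiff ℝ (⊤ : ℕ∞) φ ∧ HasCompactSupport φ ∧
      (∀ y, φ y ≠ 0 → ‖y - EuclideanSpace.single i0 2‖ < 1) ∧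
      (∀ y, ‖y - EuclideanSpace.single i0 2‖ ≤ 1 / 2 → φ y = y i0 - 2) := by
  let χ : ContDiffBump (EuclideanSpace.single i0 (2 : ℝ)) := ⟨1 / 2, 1, by norm_num, by norm_num⟩
  refine ⟨fun y => χ y * (y i0 - 2), ?_, ?_, ?_, ?_⟩
  · exact χ.contDiff.mul ((EuclideanSpace.proj i0 : _ →L[ℝ] ℝ).contDiff.sub contDiff_const)
  · exact χ.hasCompactSupport.mul_right
  · intro y hy
    have : χ y ≠ 0 := left_ne_zero_of_mul hy
    have h2 : y ∈ Function.support χ := this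
    rw [χ.support_eq, Metric.mem_ball, dist_eq_norm] at h2
    exact h2
  · intro y hy
    have : χ y = 1 := χ.one_of_mem_closedBall (by rwa [Metric.mem_closedBall, dist_eq_norm])
    simp [this]

/-! ### The weighted `L^p` norm and ball means -/

lemma wLpE_mono {n : ℕ} {p α : ℝ} (hp : 0 < p) {F H : EuclideanSpace ℝ (Fin n) → ℝ≥0∞}
    (h : ∀ x, F x ≤ H x) : wLpE n p α F ≤ wLpE n p α H := by
  unfold wLpE
  gcongr with x
  exact h x

lemma wLpE_const_mul {n : ℕ} {p α : ℝ} (hp : 0 < p) {c : ℝ≥0∞} (hc : c ≠ ∞)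
    (F : EuclideanSpace ℝ (Fin n) → ℝ≥0∞) :
    wLpE n p α (fun x => c * F x) = c * wLpE n p α F := by
  unfold wLpE
  simp_rw [ENNReal.mul_rpow_of_nonneg _ _ hp.le, mul_assoc]
  rw [lintegral_const_mul' _ _ (ENNReal.rpow_ne_top_of_nonneg hp.le hc),
    ENNReal.mul_rpow_of_nonneg _ _ (by positivity), ← ENNReal.rpow_mul,
    mul_one_div_cancel hp.ne', ENNReal.rpow_one]

lemma measurable_weight (n : ℕ) (α : ℝ) :
    Measurable fun x : EuclideanSpace ℝ (Fin n) => (‖x‖₊ : ℝ≥0∞) ^ α :=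
  (measurable_nnnorm.coe_nnreal_ennreal).pow_const α

/-- The weighted functional as an unweighted one for the measure `|x|^α dx`. -/
lemma wLpE_eq {n : ℕ} {p α : ℝ} {F : EuclideanSpace ℝ (Fin n) → ℝ≥0∞} (hF : Measurable F) :
    wLpE n p α F = (∫⁻ x, F x ^ p
      ∂(volume.withDensity fun x : EuclideanSpace ℝ (Fin n) => (‖x‖₊ : ℝ≥0∞) ^ α)) ^ (1 / p) := by
  unfold wLpE
  rw [lintegral_withDensity_eq_lintegral_mul _ (measurable_weight n α) (hF.pow_const p)]
  congr 1
  refine lintegral_congr fun x => ?_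
  simp [mul_comm]

lemma wLpE_add_le {n : ℕ} {p α : ℝ} (hp : 1 ≤ p) {F H : EuclideanSpace ℝ (Fin n) → ℝ≥0∞}
    (hF : Measurable F) (hH : Measurable H) :
    wLpE n p α (fun x => F x + H x) ≤ wLpE n p α F + wLpE n p α H := by
  rw [wLpE_eq hF, wLpE_eq hH, wLpE_eq (F := fun x => F x + H x) (hF.add hH)]
  exact ENNReal.lintegral_Lp_add_le hF.aemeasurable hH.aemeasurable hp

/-- The Minkowski inequality for countable sums. -/
lemma wLpE_tsum_le {n : ℕ} {p α : ℝ} (hp : 1 ≤ p) {F : ℕ → EuclideanSpace ℝ (Fin n) → ℝ≥0∞}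
    (hF : ∀ j, Measurable (F j)) :
    wLpE n p α (fun x => ∑' j, F j x) ≤ ∑' j, wLpE n p α (F j) := by
  have hp0 : 0 < p := by linarith
  have hmeas : ∀ N, Measurable fun x => ∑ j ∈ Finset.range N, F j x := fun N =>
    Finset.measurable_fun_sum _ fun j _ => hF j
  have hfin : ∀ N, wLpE n p α (fun x => ∑ j ∈ Finset.range N, F j x)
      ≤ ∑ j ∈ Finset.range N, wLpE n p α (F j) := by
    intro N
    induction N with
    | zero =>
      simp [wLpE, hp0]
    | succ N ih =>
      simp_rw [Finset.sum_range_succ]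
      exact (wLpE_add_le hp (hmeas N) (hF N)).trans (by gcongr)
  have hlim : wLpE n p α (fun x => ∑' j, F j x)
      = ⨆ N, wLpE n p α (fun x => ∑ j ∈ Finset.range N, F j x) := by
    rw [wLpE_eq (Measurable.tsum hF)]
    simp_rw [wLpE_eq (hmeas _)]
    have e1 := (ENNReal.orderIsoRpow (1 / p) (by positivity)).map_iSup
      (fun N : ℕ => ∫⁻ x, (∑ j ∈ Finset.range N, F j x) ^ p
        ∂(volume.withDensity fun x : EuclideanSpace ℝ (Fin n) => (‖x‖₊ : ℝ≥0∞) ^ α))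
    simp only [ENNReal.orderIsoRpow_apply] at e1
    rw [← e1, ← lintegral_iSup (fun N => (hmeas N).pow_const p)]
    · congr 1
      refine lintegral_congr fun x => ?_
      have e2 := (ENNReal.orderIsoRpow p hp0).map_iSup
        (fun N : ℕ => ∑ j ∈ Finset.range N, F j x)
      simp only [ENNReal.orderIsoRpow_apply] at e2
      rw [ENNReal.tsum_eq_iSup_nat, e2]
    · intro N N' hNN x
      simp only
      gcongr
  rw [hlim]
  exact iSup_le fun N => (hfin N).trans (ENNReal.sum_le_tsum _)

lemma lintegral_inv_smul {n : ℕ} {r : ℝ} (hr : 0 < r) (H : EuclideanSpace ℝ (Fin n) → ℝ≥0∞) :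
    ∫⁻ x, H (r⁻¹ • x) = ENNReal.ofReal (r ^ n) * ∫⁻ x, H x := by
  have hemb : MeasurableEmbedding fun x : EuclideanSpace ℝ (Fin n) => r⁻¹ • x :=
    measurableEmbedding_const_smul₀ (inv_ne_zero hr.ne')
  rw [← hemb.lintegral_map, Measure.map_addHaar_smul _ (inv_ne_zero hr.ne'),
    lintegral_smul_measure]
  simp [abs_of_pos hr]

/-- Homogeneity of the weighted norm under dilations, of degree `(n + α) / p`. -/
lemma wLpE_scale {n : ℕ} {p α : ℝ} (hp : 0 < p) (hα : 0 ≤ α) {r : ℝ} (hr : 0 < r)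
    (F : EuclideanSpace ℝ (Fin n) → ℝ≥0∞) :
    wLpE n p α (fun x => F (r⁻¹ • x)) = ENNReal.ofReal (r ^ ((n + α) / p)) * wLpE n p α F := by
  unfold wLpE
  have hw : ∀ x : EuclideanSpace ℝ (Fin n), (‖x‖₊ : ℝ≥0∞) ^ α
      = ENNReal.ofReal (r ^ α) * (‖r⁻¹ • x‖₊ : ℝ≥0∞) ^ α := by
    intro x
    rw [← ENNReal.ofReal_rpow_of_nonneg hr.le hα, ← ENNReal.mul_rpow_of_nonneg _ _ hα,
      nnnorm_smul, ENNReal.coe_mul, ← mul_assoc]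
    have : ENNReal.ofReal r * (‖r⁻¹‖₊ : ℝ≥0∞) = 1 := by
      rw [show (‖r⁻¹‖₊ : ℝ≥0∞) = ENNReal.ofReal r⁻¹ from Real.enorm_of_nonneg (by positivity),
        ← ENNReal.ofReal_mul hr.le, mul_inv_cancel₀ hr.ne', ENNReal.ofReal_one]
    rw [this, one_mul]
  have h1 : ∫⁻ x, F (r⁻¹ • x) ^ p * (‖x‖₊ : ℝ≥0∞) ^ α
      = ENNReal.ofReal (r ^ ((n : ℝ) + α)) * ∫⁻ x, F x ^ p * (‖x‖₊ : ℝ≥0∞) ^ α := by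
    rw [lintegral_congr fun x => congrArg (F (r⁻¹ • x) ^ p * ·) (hw x)]
    have := lintegral_inv_smul hr (fun y => F y ^ p * (ENNReal.ofReal (r ^ α) * (‖y‖₊ : ℝ≥0∞) ^ α))
    rw [this]
    simp_rw [fun y => mul_left_comm (F y ^ p) (ENNReal.ofReal (r ^ α)) ((‖y‖₊ : ℝ≥0∞) ^ α)]
    rw [lintegral_const_mul' _ _ ENNReal.ofReal_ne_top, ← mul_assoc,
      ← ENNReal.ofReal_mul (by positivity), Real.rpow_add hr, Real.rpow_natCast]
  rw [h1, ENNReal.mul_rpow_of_nonneg _ _ (by positivity),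
    ENNReal.ofReal_rpow_of_nonneg (by positivity) (by positivity), ← Real.rpow_mul hr.le]
  congr 3
  ring

/-- The weighted norm of a constant on a ball of radius `R` is `O(R ^ ((n + α) / p))`. -/
lemma wLpE_ball (n : ℕ) {p α : ℝ} (hp : 0 < p) (hα : 0 ≤ α) :
    ∃ V : ℝ≥0∞, V ≠ ∞ ∧ ∀ R : ℝ, 0 < R → ∀ c : ℝ≥0∞, c ≠ ∞ →
      wLpE n p α ((Metric.closedBall 0 R).indicator fun _ => c)
        ≤ c * ENNReal.ofReal (R ^ ((n + α) / p)) * V := by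
  refine ⟨volume (Metric.closedBall (0 : EuclideanSpace ℝ (Fin n)) 1) ^ (1 / p),
    ENNReal.rpow_ne_top_of_nonneg (by positivity) measure_closedBall_lt_top.ne,
    fun R hR c hc => ?_⟩
  have h1 : ((Metric.closedBall (0 : EuclideanSpace ℝ (Fin n)) R).indicator fun _ => c)
      = fun x => c * (Metric.closedBall (0 : EuclideanSpace ℝ (Fin n)) 1).indicator 1 (R⁻¹ • x) := by
    funext x
    have : x ∈ Metric.closedBall (0 : EuclideanSpace ℝ (Fin n)) R ↔
        R⁻¹ • x ∈ Metric.closedBall (0 : EuclideanSpace ℝ (Fin n)) 1 := by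
      simp only [mem_closedBall_zero_iff, norm_smul, norm_inv, Real.norm_eq_abs, abs_of_pos hR]
      rw [inv_mul_le_iff₀ hR, mul_one]
    by_cases hx : x ∈ Metric.closedBall (0 : EuclideanSpace ℝ (Fin n)) R
    · rw [Set.indicator_of_mem hx, Set.indicator_of_mem (this.1 hx)]; simp
    · rw [Set.indicator_of_notMem hx, Set.indicator_of_notMem (fun h => hx (this.2 h))]; simp
  rw [h1, wLpE_const_mul hp hc,
    wLpE_scale hp hα hR ((Metric.closedBall (0 : EuclideanSpace ℝ (Fin n)) 1).indicator 1), mul_assoc]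
  gcongr
  unfold wLpE
  gcongr
  rw [← lintegral_indicator_one measurableSet_closedBall]
  refine lintegral_mono fun x => ?_
  by_cases hx : x ∈ Metric.closedBall (0 : EuclideanSpace ℝ (Fin n)) 1
  · rw [Set.indicator_of_mem hx]
    simp only [Pi.one_apply, ENNReal.one_rpow, one_mul]
    refine ENNReal.rpow_le_one ?_ hα
    rw [mem_closedBall_zero_iff] at hx
    exact_mod_cast hx
  · rw [Set.indicator_of_notMem hx]
    simp [hp]

lemma ballMeans_scale (n M : ℕ) (f : EuclideanSpace ℝ (Fin n) → ℝ) (a r t : ℝ)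
    (x : EuclideanSpace ℝ (Fin n)) :
    ballMeans n M (fun x => a * f (r⁻¹ • x)) t x
      = (‖a‖₊ : ℝ≥0∞) * ballMeans n M f (r⁻¹ * t) (r⁻¹ • x) := by
  unfold ballMeans
  rw [← lintegral_const_mul' _ _ ENNReal.coe_ne_top]
  refine lintegral_congr fun h => ?_
  rw [← ENNReal.coe_mul, ← nnnorm_mul]
  congr 2
  unfold iterDiff
  rw [Finset.mul_sum]
  refine Finset.sum_congr rfl fun i _ => ?_
  simp only
  rw [smul_add, smul_comm r⁻¹ (i : ℝ), smul_smul r⁻¹ t]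
  ring

lemma measurable_ballMeans (n M : ℕ) {f : EuclideanSpace ℝ (Fin n) → ℝ} (hf : Measurable f)
    (t : ℝ) : Measurable (ballMeans n M f t) := by
  unfold ballMeans iterDiff
  refine Measurable.lintegral_prod_right' (f := fun z : EuclideanSpace ℝ (Fin n) ×
    EuclideanSpace ℝ (Fin n) => (‖∑ i ∈ Finset.range (M + 1), (-1 : ℝ) ^ (M - i) *
      (M.choose i : ℝ) * f (z.1 + (i : ℝ) • t • z.2)‖₊ : ℝ≥0∞)) ?_
  refine Measurable.coe_nnreal_ennreal (Measurable.nnnorm ?_)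
  refine Finset.measurable_fun_sum _ fun i _ => ?_
  exact (hf.comp (by fun_prop)).const_mul _

/-! ### Differences of the profile -/

/-- For steps `u ≤ 1`, smoothness of `φ` gives ball means of size `u ^ M`, supported near the
support of `φ`. -/
lemma ballMeans_profile_small {n M : ℕ} {φ : EuclideanSpace ℝ (Fin n) → ℝ}
    (hφ : ContDiff ℝ (⊤ : ℕ∞) φ) (hφc : HasCompactSupport φ) (hsupp : ∀ y, φ y ≠ 0 → ‖y‖ ≤ 3) :
    ∃ c : ℝ≥0∞, c ≠ ∞ ∧ ∀ u : ℝ, 0 < u → u ≤ 1 → ∀ x, ballMeans n M φ u x ≤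
      (Metric.closedBall 0 (3 + M : ℝ)).indicator (fun _ => c * ENNReal.ofReal (u ^ M)) x := by
  obtain ⟨C, hC0, hC⟩ := fwdDiff_bound M ℝ φ hφ hφc
  refine ⟨ENNReal.ofReal C * volume {h : EuclideanSpace ℝ (Fin n) | ‖h‖ ≤ 1}, ?_, ?_⟩
  · refine ENNReal.mul_ne_top ENNReal.ofReal_ne_top ?_
    have : {h : EuclideanSpace ℝ (Fin n) | ‖h‖ ≤ 1} = Metric.closedBall 0 1 := by ext; simp
    rw [this]; exact measure_closedBall_lt_top.ne
  intro u hu hu1 x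
  by_cases hx : x ∈ Metric.closedBall (0 : EuclideanSpace ℝ (Fin n)) (3 + M : ℝ)
  · rw [Set.indicator_of_mem hx]
    unfold ballMeans
    calc ∫⁻ h in {h : EuclideanSpace ℝ (Fin n) | ‖h‖ ≤ 1}, (‖iterDiff n M φ (u • h) x‖₊ : ℝ≥0∞)
        ≤ ∫⁻ h in {h : EuclideanSpace ℝ (Fin n) | ‖h‖ ≤ 1}, ENNReal.ofReal (C * u ^ M) := by
          refine setLIntegral_mono measurable_const fun h hh => ?_
          rw [Set.mem_ofPred_eq] at hh
          rw [← enorm_eq_nnnorm, ← ofReal_norm]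
          refine ENNReal.ofReal_le_ofReal ?_
          rw [iterDiff_eq_fwdDiff]
          refine (hC _ _).trans ?_
          gcongr
          rw [norm_smul, Real.norm_eq_abs, abs_of_pos hu]
          nlinarith
      _ = _ := by
          rw [setLIntegral_const, ENNReal.ofReal_mul hC0]
          ring
  · rw [Set.indicator_of_notMem hx]
    unfold ballMeans
    rw [nonpos_iff_eq_zero]
    refine setLIntegral_eq_zero (by measurability) fun h hh => ?_
    rw [Set.mem_ofPred_eq] at hh
    rw [mem_closedBall_zero_iff, not_le] at hx
    have : iterDiff n M φ (u • h) x = 0 := by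
      unfold iterDiff
      refine Finset.sum_eq_zero fun i hi => ?_
      have hiM : (i : ℝ) ≤ M := by exact_mod_cast Nat.lt_succ_iff.1 (Finset.mem_range.1 hi)
      have : φ (x + (i : ℝ) • u • h) = 0 := by
        by_contra hne
        have h1 := hsupp _ hne
        have h2 : ‖(i : ℝ) • u • h‖ ≤ M := by
          rw [norm_smul, norm_smul, Real.norm_eq_abs, Real.norm_eq_abs, abs_of_pos hu,
            Nat.abs_cast]
          calc (i : ℝ) * (u * ‖h‖) ≤ M * (1 * 1) := by gcongr
            _ = M := by ring
        have h3 := norm_sub_le (x + (i : ℝ) • u • h) ((i : ℝ) • u • h)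
        rw [add_sub_cancel_right] at h3
        linarith
      rw [this, mul_zero]
    simp [this]

/-- For steps `u ≥ 1`, the term `φ x` of the difference contributes a bounded function on the
support of `φ`, and the shifted terms `φ (x + i u h)`, averaged over `h`, contribute `O(u ^ (-n))` on a
ball of radius `O(u)`. -/
lemma ballMeans_profile_large {n M : ℕ} {φ : EuclideanSpace ℝ (Fin n) → ℝ}
    (hφ : Continuous φ) (hφc : HasCompactSupport φ) (hsupp : ∀ y, φ y ≠ 0 → ‖y‖ ≤ 3) :
    ∃ c₁ c₂ : ℝ≥0∞, c₁ ≠ ∞ ∧ c₂ ≠ ∞ ∧ ∀ u : ℝ, 1 ≤ u → ∀ x, ballMeans n M φ u x ≤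
      (Metric.closedBall 0 3).indicator (fun _ => c₁) x +
      (Metric.closedBall 0 ((3 + M) * u)).indicator
        (fun _ => c₂ * ENNReal.ofReal ((u ^ n)⁻¹)) x := by
  obtain ⟨b, hb⟩ := hφc.exists_bound_of_continuous hφ
  set B : Set (EuclideanSpace ℝ (Fin n)) := {h | ‖h‖ ≤ 1} with hB
  have hBm : MeasurableSet B := by measurability
  have hBv : volume B ≠ ∞ := by
    have : B = Metric.closedBall 0 1 := by ext; simp [hB]
    rw [this]; exact measure_closedBall_lt_top.ne
  have hL : ∫⁻ x, (‖φ x‖₊ : ℝ≥0∞) ≠ ∞ := by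
    have := (hφ.integrable_of_hasCompactSupport hφc (μ := volume)).2
    exact this.ne
  refine ⟨ENNReal.ofReal b * volume B,
    ∑ i ∈ Finset.range M, (M.choose (i + 1) : ℝ≥0∞) * ∫⁻ x, (‖φ x‖₊ : ℝ≥0∞),
    ENNReal.mul_ne_top ENNReal.ofReal_ne_top hBv, ?_, fun u hu x => ?_⟩
  · refine ENNReal.sum_ne_top.2 fun i _ => ENNReal.mul_ne_top (ENNReal.natCast_ne_top _) hL
  have hu0 : 0 < u := by linarith
  have hmeas : ∀ i : ℕ, Measurable fun h : EuclideanSpace ℝ (Fin n) =>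
      (‖φ (x + (i : ℝ) • u • h)‖₊ : ℝ≥0∞) := fun i =>
    (hφ.measurable.comp (by fun_prop)).nnnorm.coe_nnreal_ennreal
  have h0 : ∫⁻ h in B, (‖φ (x + ((0 : ℕ) : ℝ) • u • h)‖₊ : ℝ≥0∞)
      ≤ (Metric.closedBall 0 3).indicator (fun _ => ENNReal.ofReal b * volume B) x := by
    simp only [Nat.cast_zero, zero_smul, add_zero, setLIntegral_const]
    by_cases hx : x ∈ Metric.closedBall (0 : EuclideanSpace ℝ (Fin n)) 3
    · rw [Set.indicator_of_mem hx]
      gcongr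
      rw [← enorm_eq_nnnorm, ← ofReal_norm]
      exact ENNReal.ofReal_le_ofReal (hb x)
    · have : φ x = 0 := by
        by_contra hne
        exact hx (by simpa using hsupp x hne)
      simp [this]
  have h1 : ∀ i < M, ∫⁻ h in B, (‖φ (x + ((i + 1 : ℕ) : ℝ) • u • h)‖₊ : ℝ≥0∞)
      ≤ (Metric.closedBall 0 ((3 + M) * u)).indicator
        (fun _ => (∫⁻ x, (‖φ x‖₊ : ℝ≥0∞)) * ENNReal.ofReal ((u ^ n)⁻¹)) x := by
    intro i hi
    have hiM : ((i + 1 : ℕ) : ℝ) ≤ M := by exact_mod_cast hi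
    have hi1 : (1 : ℝ) ≤ ((i + 1 : ℕ) : ℝ) := by exact_mod_cast Nat.succ_pos i
    by_cases hx : x ∈ Metric.closedBall (0 : EuclideanSpace ℝ (Fin n)) ((3 + M) * u)
    · rw [Set.indicator_of_mem hx]
      refine (setLIntegral_le_lintegral _ _).trans ?_
      have hr : 0 < (((i + 1 : ℕ) : ℝ) * u)⁻¹ := by positivity
      have e1 := lintegral_inv_smul hr (fun z => (‖φ (x + z)‖₊ : ℝ≥0∞))
      simp only [inv_inv, ← smul_smul] at e1
      rw [e1, lintegral_add_left_eq_self (fun z => (‖φ z‖₊ : ℝ≥0∞)) x, mul_comm]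
      gcongr
      rw [inv_pow]
      gcongr
      nlinarith
    · rw [Set.indicator_of_notMem hx, nonpos_iff_eq_zero]
      refine setLIntegral_eq_zero hBm fun h hh => ?_
      rw [hB, Set.mem_ofPred_eq] at hh
      rw [mem_closedBall_zero_iff, not_le] at hx
      have : φ (x + ((i + 1 : ℕ) : ℝ) • u • h) = 0 := by
        by_contra hne
        have h1 := hsupp _ hne
        have h2 : ‖((i + 1 : ℕ) : ℝ) • u • h‖ ≤ M * u := by
          rw [norm_smul, norm_smul, Real.norm_eq_abs, Real.norm_eq_abs, abs_of_pos hu0,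
            Nat.abs_cast]
          calc ((i + 1 : ℕ) : ℝ) * (u * ‖h‖) ≤ M * (u * 1) := by gcongr
            _ = M * u := by ring
        have h3 := norm_sub_le (x + ((i + 1 : ℕ) : ℝ) • u • h) (((i + 1 : ℕ) : ℝ) • u • h)
        rw [add_sub_cancel_right] at h3
        nlinarith
      simp only [this, nnnorm_zero, ENNReal.coe_zero]
      rfl
  calc ballMeans n M φ u x
      ≤ ∫⁻ h in B, ∑ i ∈ Finset.range (M + 1), (M.choose i : ℝ≥0∞) *
          (‖φ (x + (i : ℝ) • u • h)‖₊ : ℝ≥0∞) := by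
        unfold ballMeans
        refine lintegral_mono fun h => ?_
        unfold iterDiff
        simp only [← enorm_eq_nnnorm]
        refine (enorm_sum_le _ _).trans (Finset.sum_le_sum fun i _ => ?_)
        rw [enorm_mul, enorm_mul, enorm_pow, enorm_neg, enorm_one, one_pow, one_mul]
        gcongr
        simp
    _ = ∑ i ∈ Finset.range (M + 1), (M.choose i : ℝ≥0∞) *
          ∫⁻ h in B, (‖φ (x + (i : ℝ) • u • h)‖₊ : ℝ≥0∞) := by
        rw [lintegral_finsetSum _ fun i _ => (hmeas i).const_mul _]
        exact Finset.sum_congr rfl fun i _ => lintegral_const_mul _ (hmeas i)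
    _ ≤ _ := by
        rw [Finset.sum_range_succ', add_comm]
        refine add_le_add (by simpa using h0) ?_
        calc _ ≤ ∑ i ∈ Finset.range M, (M.choose (i + 1) : ℝ≥0∞) *
              (Metric.closedBall 0 ((3 + M) * u)).indicator
              (fun _ => (∫⁻ x, (‖φ x‖₊ : ℝ≥0∞)) * ENNReal.ofReal ((u ^ n)⁻¹)) x :=
              Finset.sum_le_sum fun i hi => by
                gcongr
                exact h1 i (Finset.mem_range.1 hi)
          _ ≤ _ := by
            by_cases hx : x ∈ Metric.closedBall (0 : EuclideanSpace ℝ (Fin n)) ((3 + M) * u)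
            · simp only [Set.indicator_of_mem hx, Finset.sum_mul]
              exact Finset.sum_le_sum fun i _ => by rw [mul_assoc]
            · simp [Set.indicator_of_notMem hx]

/-- The ball means of the profile are `O(u ^ σ)` in the weighted norm for all steps `u > 0`. For
`u ≥ 1` the condition `α < n (p - 1)` enters: it gives `(n + α) / p ≤ n`, so that the part of size
`u ^ (-n)` on a ball of radius `O(u)` stays bounded. -/
lemma profile_bound {n M : ℕ} {p α σ : ℝ} (hp : 1 < p) (hα0 : 0 ≤ α) (hα : α < n * (p - 1))
    (hσ0 : 0 ≤ σ) (hσM : σ ≤ M) {φ : EuclideanSpace ℝ (Fin n) → ℝ}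
    (hφ : ContDiff ℝ (⊤ : ℕ∞) φ) (hφc : HasCompactSupport φ) (hsupp : ∀ y, φ y ≠ 0 → ‖y‖ ≤ 3) :
    ∃ C : ℝ≥0∞, C ≠ ∞ ∧ ∀ u : ℝ, 0 < u →
      wLpE n p α (ballMeans n M φ u) ≤ C * ENNReal.ofReal (u ^ σ) := by
  have hp0 : 0 < p := by linarith
  obtain ⟨V, hV, hVb⟩ := wLpE_ball n hp0 hα0
  obtain ⟨c, hc, hsmall⟩ := ballMeans_profile_small (M := M) hφ hφc hsupp
  obtain ⟨c₁, c₂, hc₁, hc₂, hlarge⟩ := ballMeans_profile_large (M := M) hφ.continuous hφc hsupp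
  set κ : ℝ := (n + α) / p with hκ
  have hκn : κ ≤ n := by
    rw [hκ, div_le_iff₀ hp0]; nlinarith
  refine ⟨c * ENNReal.ofReal ((3 + M : ℝ) ^ κ) * V + (c₁ * ENNReal.ofReal ((3 : ℝ) ^ κ) * V +
    c₂ * ENNReal.ofReal ((3 + M : ℝ) ^ κ) * V), ?_, fun u hu => ?_⟩
  · finiteness
  rcases le_total u 1 with hu1 | hu1
  · calc wLpE n p α (ballMeans n M φ u)
        ≤ c * ENNReal.ofReal (u ^ M) * ENNReal.ofReal ((3 + M : ℝ) ^ κ) * V :=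
          (wLpE_mono hp0 (hsmall u hu hu1)).trans (hVb _ (by positivity) _ (by finiteness))
      _ = c * ENNReal.ofReal ((3 + M : ℝ) ^ κ) * V * ENNReal.ofReal (u ^ M) := by ring
      _ ≤ _ := by
        gcongr
        · exact le_self_add
        · rw [← Real.rpow_natCast]
          exact Real.rpow_le_rpow_of_exponent_ge hu hu1 hσM
  · have hone : (1 : ℝ≥0∞) ≤ ENNReal.ofReal (u ^ σ) := by
      rw [ENNReal.one_le_ofReal]; exact Real.one_le_rpow hu1 hσ0
    calc wLpE n p α (ballMeans n M φ u)
        ≤ c₁ * ENNReal.ofReal ((3 : ℝ) ^ κ) * V +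
          c₂ * ENNReal.ofReal ((u ^ n)⁻¹) * ENNReal.ofReal (((3 + M) * u : ℝ) ^ κ) * V :=
          (wLpE_mono hp0 (hlarge u hu1)).trans <| (wLpE_add_le hp.le
            (measurable_const.indicator measurableSet_closedBall)
            (measurable_const.indicator measurableSet_closedBall)).trans <|
            add_le_add (hVb _ (by positivity) _ (by finiteness))
              (hVb _ (by positivity) _ (by finiteness))
      _ ≤ c₁ * ENNReal.ofReal ((3 : ℝ) ^ κ) * V + c₂ * ENNReal.ofReal ((3 + M : ℝ) ^ κ) * V := by
        rw [mul_assoc c₂, ← ENNReal.ofReal_mul (by positivity)]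
        gcongr
        rw [Real.mul_rpow (by positivity) hu.le, mul_left_comm]
        refine mul_le_of_le_one_right (by positivity) ?_
        rw [inv_mul_le_iff₀ (by positivity), mul_one, ← Real.rpow_natCast]
        exact Real.rpow_le_rpow_of_exponent_le hu1 hκn
      _ ≤ _ := le_add_self
      _ ≤ _ := le_mul_of_one_le_right zero_le hone

/-! ### The lacunary test function -/

/-- A decay rate `t ^ σ` of the ball means with some `σ > s` gives membership in the Besov space
of smoothness `s`, for every `q`. -/
lemma memBesov_of_bound {n M : ℕ} {p α s σ : ℝ} {q : ℝ≥0∞} (hq : 1 ≤ q) (hsσ : s < σ)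
    {f : EuclideanSpace ℝ (Fin n) → ℝ} (hf : Measurable f) (hfp : wLp n p α f ≠ ∞)
    {K : ℝ≥0∞} (hK : K ≠ ∞)
    (hb : ∀ t : ℝ, 0 < t → wLpE n p α (ballMeans n M f t) ≤ K * ENNReal.ofReal (t ^ σ)) :
    MemBesov n p α s q M f := by
  refine ⟨hf, ?_⟩
  unfold besovNorm
  refine ENNReal.add_lt_top.2 ⟨hfp.lt_top, ?_⟩
  split_ifs with hqt
  · refine lt_of_le_of_lt (iSup₂_le fun t ht => ?_) hK.lt_top
    calc ENNReal.ofReal (t ^ (-s)) * wLpE n p α (ballMeans n M f t)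
        ≤ ENNReal.ofReal (t ^ (-s)) * (K * ENNReal.ofReal (t ^ σ)) := by gcongr; exact hb t ht.1
      _ = K * ENNReal.ofReal (t ^ (σ - s)) := by
          rw [mul_left_comm, ← ENNReal.ofReal_mul (Real.rpow_nonneg ht.1.le _),
            ← Real.rpow_add ht.1]
          congr 3; ring
      _ ≤ K * 1 := by
          gcongr
          rw [ENNReal.ofReal_le_one]
          exact Real.rpow_le_one ht.1.le ht.2.le (by linarith)
      _ = K := mul_one K
  · have hq0 : 0 < q.toReal := ENNReal.toReal_pos (by positivity) hqt
    refine ENNReal.rpow_lt_top_of_nonneg (by positivity) (ne_of_lt ?_)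
    calc ∫⁻ t in Set.Ioo (0 : ℝ) 1, ENNReal.ofReal (t ^ (-(s * q.toReal))) *
            wLpE n p α (ballMeans n M f t) ^ q.toReal * ENNReal.ofReal t⁻¹
        ≤ ∫⁻ t in Set.Ioo (0 : ℝ) 1, K ^ q.toReal *
            ENNReal.ofReal (t ^ ((σ - s) * q.toReal - 1)) := by
          refine setLIntegral_mono' measurableSet_Ioo fun t ht => ?_
          have ht0 := ht.1
          calc _ ≤ ENNReal.ofReal (t ^ (-(s * q.toReal))) *
                (K * ENNReal.ofReal (t ^ σ)) ^ q.toReal * ENNReal.ofReal t⁻¹ := by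
                gcongr; exact hb t ht0
            _ = K ^ q.toReal * (ENNReal.ofReal (t ^ (-(s * q.toReal))) *
                (ENNReal.ofReal (t ^ (σ * q.toReal))) * ENNReal.ofReal (t ^ (-1 : ℝ))) := by
                rw [ENNReal.mul_rpow_of_nonneg _ _ hq0.le,
                  ENNReal.ofReal_rpow_of_nonneg (by positivity) hq0.le, ← Real.rpow_mul ht0.le,
                  Real.rpow_neg_one]
                ring
            _ = _ := by
                rw [← ENNReal.ofReal_mul (by positivity), ← ENNReal.ofReal_mul (by positivity),
                  ← Real.rpow_add ht0, ← Real.rpow_add ht0]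
                congr 3; ring
      _ < ∞ := by
          rw [lintegral_const_mul' _ _ (ENNReal.rpow_ne_top_of_nonneg hq0.le hK)]
          refine ENNReal.mul_lt_top (ENNReal.rpow_lt_top_of_nonneg hq0.le hK) ?_
          have hIntegrable : IntegrableOn (fun t : ℝ => t ^ ((σ - s) * q.toReal - 1)) (Set.Ioo 0 1) :=
            (intervalIntegral.integrableOn_Ioo_rpow_iff one_pos).2
              (by nlinarith [mul_pos (sub_pos.2 hsσ) hq0])
          exact hIntegrable.lintegral_lt_top

/-- The superposition `∑ⱼ rⱼ ^ (-β) φ(x / rⱼ)` with `rⱼ = ρ ^ j`. For `φ` supported in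
`1 < ‖y‖ < 3` and `3 ρ ≤ 1` at most one term is nonzero at each point. -/
def lacunary (n : ℕ) (φ : EuclideanSpace ℝ (Fin n) → ℝ) (ρ β : ℝ)
    (x : EuclideanSpace ℝ (Fin n)) : ℝ :=
  ∑' j : ℕ, (ρ ^ j) ^ (-β) * φ ((ρ ^ j)⁻¹ • x)

section lacunary

variable {n : ℕ} {φ : EuclideanSpace ℝ (Fin n) → ℝ} {ρ β : ℝ}

/-- The rescaled copies of `φ` have disjoint supports: on the annulus `ρ ^ j ≤ ‖x‖ ≤ ρ ^ (j - 1)`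
only the `j`-th copy is nonzero. -/
lemma lacunary_term_zero (hρ0 : 0 < ρ) (hρ : 3 * ρ ≤ 1)
    (hsupp : ∀ y, φ y ≠ 0 → 1 < ‖y‖ ∧ ‖y‖ < 3) {y : EuclideanSpace ℝ (Fin n)} (hy1 : 1 ≤ ‖y‖)
    (hy2 : ‖y‖ ≤ ρ⁻¹) {j k : ℕ} (hjk : k ≠ j) : φ ((ρ ^ k)⁻¹ • (ρ ^ j) • y) = 0 := by
  by_contra hne
  obtain ⟨h1, h2⟩ := hsupp _ hne
  have hρ1 : ρ ≤ 1 := by linarith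
  have hk : (0 : ℝ) < ρ ^ k := by positivity
  have hj : (0 : ℝ) < ρ ^ j := by positivity
  have hnorm : ‖(ρ ^ k)⁻¹ • (ρ ^ j) • y‖ = (ρ ^ j * ‖y‖) / ρ ^ k := by
    rw [norm_smul, norm_smul, norm_inv, Real.norm_of_nonneg hk.le, Real.norm_of_nonneg hj.le]
    ring
  rw [hnorm] at h1 h2
  rw [lt_div_iff₀ hk] at h1
  rw [div_lt_iff₀ hk] at h2
  rcases lt_or_gt_of_ne hjk with hlt | hlt
  · have h3 : ρ ^ j ≤ ρ ^ (k + 1) := pow_le_pow_of_le_one hρ0.le hρ1 hlt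
    have h4 : ρ ^ j * ‖y‖ ≤ ρ ^ (k + 1) * ρ⁻¹ := by gcongr
    have h5 : ρ ^ (k + 1) * ρ⁻¹ = ρ ^ k := by
      rw [pow_succ, mul_assoc, mul_inv_cancel₀ hρ0.ne', mul_one]
    linarith
  · have h3 : ρ ^ k ≤ ρ ^ (j + 1) := pow_le_pow_of_le_one hρ0.le hρ1 hlt
    rw [pow_succ] at h3
    nlinarith

/-- On the annulus `1 ≤ ‖y‖ ≤ ρ⁻¹` the lacunary function rescaled by `ρ ^ j` is a multiple of the
profile, with amplitude `(ρ ^ j) ^ (-β)`. -/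
lemma lacunary_eq (hρ0 : 0 < ρ) (hρ : 3 * ρ ≤ 1)
    (hsupp : ∀ y, φ y ≠ 0 → 1 < ‖y‖ ∧ ‖y‖ < 3) {y : EuclideanSpace ℝ (Fin n)} (hy1 : 1 ≤ ‖y‖)
    (hy2 : ‖y‖ ≤ ρ⁻¹) (j : ℕ) :
    lacunary n φ ρ β ((ρ ^ j) • y) = (ρ ^ j) ^ (-β) * φ y := by
  have hj : (ρ ^ j : ℝ) ≠ 0 := by positivity
  unfold lacunary
  rw [tsum_eq_single j fun k hk => by rw [lacunary_term_zero hρ0 hρ hsupp hy1 hy2 hk, mul_zero],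
    smul_smul, inv_mul_cancel₀ hj, one_smul]

lemma lacunary_summable (hρ0 : 0 < ρ) (hρ : 3 * ρ ≤ 1)
    (hsupp : ∀ y, φ y ≠ 0 → 1 < ‖y‖ ∧ ‖y‖ < 3) (x : EuclideanSpace ℝ (Fin n)) :
    Summable fun j : ℕ => (ρ ^ j) ^ (-β) * φ ((ρ ^ j)⁻¹ • x) := by
  refine summable_of_hasFiniteSupport (Set.Subsingleton.finite ?_)
  intro k hk j hj
  by_contra hkj
  have hk' : φ ((ρ ^ k)⁻¹ • x) ≠ 0 := right_ne_zero_of_mul hk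
  have hj' : φ ((ρ ^ j)⁻¹ • x) ≠ 0 := right_ne_zero_of_mul hj
  obtain ⟨h1, h2⟩ := hsupp _ hj'
  have h3 : (3 : ℝ) ≤ ρ⁻¹ := by rw [le_inv_comm₀ (by norm_num) hρ0]; linarith
  have := lacunary_term_zero hρ0 hρ hsupp h1.le (h2.le.trans h3) hkj
  rw [smul_smul (ρ ^ j), mul_inv_cancel₀ (by positivity), one_smul] at this
  exact hk' this

lemma lacunary_measurable (hφ : Measurable φ) (hρ0 : 0 < ρ) (hρ : 3 * ρ ≤ 1)
    (hsupp : ∀ y, φ y ≠ 0 → 1 < ‖y‖ ∧ ‖y‖ < 3) : Measurable (lacunary n φ ρ β) := by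
  refine measurable_of_tendsto_metrizable (f := fun N x => ∑ j ∈ Finset.range N,
    (ρ ^ j) ^ (-β) * φ ((ρ ^ j)⁻¹ • x)) (fun N => ?_) ?_
  · exact Finset.measurable_fun_sum _ fun j _ => (hφ.comp (by fun_prop)).const_mul _
  · exact tendsto_pi_nhds.2 fun x =>
      (lacunary_summable hρ0 hρ hsupp x).hasSum.tendsto_sum_nat

lemma lacunary_iterDiff (M : ℕ) (hρ0 : 0 < ρ) (hρ : 3 * ρ ≤ 1)
    (hsupp : ∀ y, φ y ≠ 0 → 1 < ‖y‖ ∧ ‖y‖ < 3) (h x : EuclideanSpace ℝ (Fin n)) :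
    HasSum (fun j : ℕ => iterDiff n M (fun x => (ρ ^ j) ^ (-β) * φ ((ρ ^ j)⁻¹ • x)) h x)
      (iterDiff n M (lacunary n φ ρ β) h x) := by
  unfold iterDiff
  exact hasSum_sum fun i _ => (lacunary_summable hρ0 hρ hsupp _).hasSum.mul_left _

lemma tsum_geometric_ne_top (hρ0 : 0 < ρ) (hρ1 : ρ < 1) {δ : ℝ} (hδ : 0 < δ) :
    ∑' j : ℕ, ENNReal.ofReal ((ρ ^ j) ^ δ) ≠ ∞ := by
  have h1 : ∀ j : ℕ, ((ρ ^ j : ℝ)) ^ δ = (ρ ^ δ) ^ j := fun j => by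
    rw [← Real.rpow_natCast, ← Real.rpow_natCast, ← Real.rpow_mul hρ0.le, ← Real.rpow_mul hρ0.le,
      mul_comm]
  simp_rw [h1]
  exact (summable_geometric_of_lt_one (by positivity)
    (Real.rpow_lt_one hρ0.le hρ1 hδ)).tsum_ofReal_ne_top

lemma lacunary_wLp {p α : ℝ} (hp : 1 < p) (hα0 : 0 ≤ α) (hφ : Continuous φ)
    (hφc : HasCompactSupport φ) (hρ0 : 0 < ρ) (hρ : 3 * ρ ≤ 1)
    (hsupp : ∀ y, φ y ≠ 0 → 1 < ‖y‖ ∧ ‖y‖ < 3) (hβ : β < (n + α) / p) :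
    wLp n p α (lacunary n φ ρ β) ≠ ∞ := by
  have hp0 : 0 < p := by linarith
  have hφp : wLp n p α φ ≠ ∞ := by
    obtain ⟨V, hV, hVb⟩ := wLpE_ball n hp0 hα0
    obtain ⟨b, hb⟩ := hφc.exists_bound_of_continuous hφ
    refine ne_top_of_le_ne_top ?_ ((wLpE_mono hp0 (H := (Metric.closedBall 0 3).indicator
      fun _ => ENNReal.ofReal b) fun x => ?_).trans (hVb 3 (by norm_num) _ (by finiteness)))
    · finiteness
    by_cases hx : φ x = 0
    · simp [hx]
    · rw [Set.indicator_of_mem (by simpa using (hsupp x hx).2.le), ← enorm_eq_nnnorm,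
        ← ofReal_norm]
      exact ENNReal.ofReal_le_ofReal (hb x)
  have hterm : ∀ j : ℕ, wLpE n p α (fun x => (‖(ρ ^ j) ^ (-β) * φ ((ρ ^ j)⁻¹ • x)‖₊ : ℝ≥0∞))
      = ENNReal.ofReal ((ρ ^ j) ^ ((n + α) / p - β)) * wLp n p α φ := by
    intro j
    have hj : (0 : ℝ) < ρ ^ j := by positivity
    simp_rw [nnnorm_mul, ENNReal.coe_mul]
    rw [wLpE_const_mul hp0 ENNReal.coe_ne_top,
      wLpE_scale hp0 hα0 hj (fun y => (‖φ y‖₊ : ℝ≥0∞)), ← mul_assoc]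
    congr 1
    rw [← enorm_eq_nnnorm, Real.enorm_of_nonneg (by positivity),
      ← ENNReal.ofReal_mul (by positivity), ← Real.rpow_add hj]
    congr 2; ring
  refine ne_top_of_le_ne_top ?_ ((wLpE_mono hp0 (H := fun x =>
    ∑' j : ℕ, (‖(ρ ^ j) ^ (-β) * φ ((ρ ^ j)⁻¹ • x)‖₊ : ℝ≥0∞)) fun x => ?_).trans
      (wLpE_tsum_le hp.le fun j => ?_))
  · simp_rw [hterm]
    rw [ENNReal.tsum_mul_right]
    exact ENNReal.mul_ne_top (tsum_geometric_ne_top hρ0 (by linarith) (by linarith)) hφp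
  · exact enorm_tsum_le_tsum_enorm (ε := ℝ)
  · exact ((hφ.measurable.comp (by fun_prop)).const_mul _).nnnorm.coe_nnreal_ennreal

/-- By homogeneity the `j`-th copy contributes `(ρ ^ j) ^ ((n + α) / p - σ - β) t ^ σ`, and the sum
over `j` is a convergent geometric series. -/
lemma lacunary_ballMeans {M : ℕ} {p α σ : ℝ} (hp : 1 < p) (hα0 : 0 ≤ α) (hφ : Continuous φ)
    (hρ0 : 0 < ρ) (hρ : 3 * ρ ≤ 1)
    (hsupp : ∀ y, φ y ≠ 0 → 1 < ‖y‖ ∧ ‖y‖ < 3) (hβ : β < (n + α) / p - σ)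
    {C : ℝ≥0∞} (hC : C ≠ ∞)
    (hb : ∀ u : ℝ, 0 < u → wLpE n p α (ballMeans n M φ u) ≤ C * ENNReal.ofReal (u ^ σ)) :
    ∃ K : ℝ≥0∞, K ≠ ∞ ∧ ∀ t : ℝ, 0 < t →
      wLpE n p α (ballMeans n M (lacunary n φ ρ β) t) ≤ K * ENNReal.ofReal (t ^ σ) := by
  have hp0 : 0 < p := by linarith
  refine ⟨(∑' j : ℕ, ENNReal.ofReal ((ρ ^ j) ^ ((n + α) / p - σ - β))) * C,
    ENNReal.mul_ne_top (tsum_geometric_ne_top hρ0 (by linarith) (by linarith)) hC,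
    fun t ht => ?_⟩
  have hmeas : ∀ j : ℕ, Measurable fun x => (ρ ^ j) ^ (-β) * φ ((ρ ^ j)⁻¹ • x) := fun j =>
    (hφ.measurable.comp (by fun_prop)).const_mul _
  have hpt : ∀ x, ballMeans n M (lacunary n φ ρ β) t x ≤
      ∑' j : ℕ, ballMeans n M (fun x => (ρ ^ j) ^ (-β) * φ ((ρ ^ j)⁻¹ • x)) t x := by
    intro x
    unfold ballMeans
    rw [← lintegral_tsum]
    · refine lintegral_mono fun h => ?_
      simp only
      rw [← (lacunary_iterDiff M hρ0 hρ hsupp (t • h) x).tsum_eq]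
      exact enorm_tsum_le_tsum_enorm (ε := ℝ)
    · intro j
      refine (Measurable.coe_nnreal_ennreal (Measurable.nnnorm ?_)).aemeasurable
      unfold iterDiff
      exact Finset.measurable_fun_sum _ fun i _ => ((hmeas j).comp (by fun_prop)).const_mul _
  refine ((wLpE_mono hp0 hpt).trans
    (wLpE_tsum_le hp.le fun j => measurable_ballMeans n M (hmeas j) t)).trans ?_
  rw [mul_assoc, ← ENNReal.tsum_mul_right]
  refine ENNReal.tsum_le_tsum fun j => ?_
  have hj : (0 : ℝ) < ρ ^ j := by positivity
  have e1 : ballMeans n M (fun x => (ρ ^ j) ^ (-β) * φ ((ρ ^ j)⁻¹ • x)) t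
      = fun x => (‖(ρ ^ j : ℝ) ^ (-β)‖₊ : ℝ≥0∞) *
        ballMeans n M φ ((ρ ^ j)⁻¹ * t) ((ρ ^ j)⁻¹ • x) :=
    funext fun x => ballMeans_scale n M φ _ _ t x
  rw [e1, wLpE_const_mul hp0 ENNReal.coe_ne_top, wLpE_scale hp0 hα0 hj (ballMeans n M φ _)]
  have hτ : 0 < (ρ ^ j)⁻¹ * t := by positivity
  calc _ ≤ (‖(ρ ^ j : ℝ) ^ (-β)‖₊ : ℝ≥0∞) * (ENNReal.ofReal ((ρ ^ j) ^ ((n + α) / p)) *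
        (C * ENNReal.ofReal (((ρ ^ j)⁻¹ * t) ^ σ))) := by
        gcongr; exact hb _ hτ
    _ = C * (ENNReal.ofReal ((ρ ^ j) ^ (-β)) * ENNReal.ofReal ((ρ ^ j) ^ ((n + α) / p)) *
        ENNReal.ofReal ((ρ ^ j) ^ (-σ)) * ENNReal.ofReal (t ^ σ)) := by
        rw [Real.mul_rpow (by positivity) ht.le, ENNReal.ofReal_mul (by positivity),
          Real.inv_rpow hj.le, ← Real.rpow_neg hj.le, ← enorm_eq_nnnorm,
          Real.enorm_of_nonneg (by positivity)]
        ring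
    _ = _ := by
        rw [← ENNReal.ofReal_mul (by positivity), ← ENNReal.ofReal_mul (by positivity),
          ← Real.rpow_add hj, ← Real.rpow_add hj,
          show -β + (n + α) / p + -σ = (n + α) / p - σ - β by ring]
        ring

end lacunary

/-! ### Lower bounds for the Besov norm -/

/-- A finite Besov norm controls `T ^ (-s) ‖d_t g‖` whenever it is bounded below on a whole
multiplicative window `T < t < L T`, uniformly in `q`. -/
lemma besov_window {n M : ℕ} {p α s : ℝ} {q : ℝ≥0∞} (hq : 1 ≤ q) (hs : 0 < s)
    {g : EuclideanSpace ℝ (Fin n) → ℝ} (hg : besovNorm n p α s q M g < ∞) {L : ℝ} (hL : 1 < L) :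
    ∃ K : ℝ≥0∞, K ≠ ∞ ∧ ∀ T : ℝ, 0 < T → L * T < 1 → ∀ B : ℝ≥0∞,
      (∀ t ∈ Set.Ioo T (L * T), B ≤ wLpE n p α (ballMeans n M g t)) →
        ENNReal.ofReal (T ^ (-s)) * B ≤ K := by
  have hL0 : 0 < L := by linarith
  unfold besovNorm at hg
  have hg2 := (ENNReal.add_lt_top.1 hg).2
  clear hg
  have hmon : ∀ T t : ℝ, 0 < T → t ∈ Set.Ioo T (L * T) → ∀ e : ℝ, 0 ≤ e →
      T ^ (-e) ≤ L ^ e * t ^ (-e) := by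
    intro T t hT ht e he
    have ht0 : 0 < t := hT.trans ht.1
    have h1 : (L * T) ^ (-e) ≤ t ^ (-e) :=
      Real.rpow_le_rpow_of_nonpos ht0 ht.2.le (by linarith)
    have h2 : L ^ e * (L * T) ^ (-e) = T ^ (-e) := by
      rw [Real.mul_rpow hL0.le hT.le, ← mul_assoc, ← Real.rpow_add hL0]; simp
    rw [← h2]
    gcongr
  split_ifs at hg2 with hqt
  · refine ⟨ENNReal.ofReal (L ^ s) * _, ENNReal.mul_ne_top ENNReal.ofReal_ne_top hg2.ne,
      fun T hT hLT B hB => ?_⟩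
    have ht : (1 + L) / 2 * T ∈ Set.Ioo T (L * T) := ⟨by nlinarith, by nlinarith⟩
    set t := (1 + L) / 2 * T
    have ht1 : t ∈ Set.Ioo (0 : ℝ) 1 := ⟨hT.trans ht.1, ht.2.trans hLT⟩
    calc ENNReal.ofReal (T ^ (-s)) * B
        ≤ ENNReal.ofReal (L ^ s * t ^ (-s)) * wLpE n p α (ballMeans n M g t) := by
          gcongr
          · exact hmon T t hT ht s hs.le
          · exact hB t ht
      _ = ENNReal.ofReal (L ^ s) *
          (ENNReal.ofReal (t ^ (-s)) * wLpE n p α (ballMeans n M g t)) := by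
          rw [ENNReal.ofReal_mul (by positivity), mul_assoc]
      _ ≤ _ := by
          gcongr
          exact le_iSup₂_of_le (f := fun (t : ℝ) (_ : t ∈ Set.Ioo (0 : ℝ) 1) =>
            ENNReal.ofReal (t ^ (-s)) * wLpE n p α (ballMeans n M g t)) t ht1 le_rfl
  · have hq0 : 0 < q.toReal := ENNReal.toReal_pos (by positivity) hqt
    set I := ∫⁻ t in Set.Ioo (0 : ℝ) 1, ENNReal.ofReal (t ^ (-(s * q.toReal))) *
            wLpE n p α (ballMeans n M g t) ^ q.toReal * ENNReal.ofReal t⁻¹ with hI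
    have hItop : I ≠ ∞ := by
      intro h
      rw [h, ENNReal.top_rpow_of_pos (by positivity)] at hg2
      exact lt_irrefl _ hg2
    set D : ℝ := L ^ (s * q.toReal) * (L / (L - 1)) with hD
    refine ⟨(ENNReal.ofReal D * I) ^ (1 / q.toReal),
      ENNReal.rpow_ne_top_of_nonneg (by positivity)
        (ENNReal.mul_ne_top ENNReal.ofReal_ne_top hItop), fun T hT hLT B hB => ?_⟩
    rw [one_div, ENNReal.le_rpow_inv_iff hq0, ENNReal.mul_rpow_of_nonneg _ _ hq0.le,
      ENNReal.ofReal_rpow_of_nonneg (by positivity) hq0.le, ← Real.rpow_mul hT.le]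
    have hsub : Set.Ioo T (L * T) ⊆ Set.Ioo (0 : ℝ) 1 := fun t ht =>
      ⟨hT.trans ht.1, ht.2.trans hLT⟩
    have hL1 : 0 < L - 1 := by linarith
    -- `∫_T^{LT} dt / t` is at least `(L - 1) / L`
    have hconst : ENNReal.ofReal (T ^ (-s * q.toReal)) * B ^ q.toReal
        = ENNReal.ofReal (L / (L - 1)) * ∫⁻ _ in Set.Ioo T (L * T),
          ENNReal.ofReal (T ^ (-s * q.toReal)) * B ^ q.toReal * ENNReal.ofReal (L * T)⁻¹ := by
      rw [setLIntegral_const, Real.volume_Ioo, mul_assoc _ (ENNReal.ofReal (L * T)⁻¹),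
        ← ENNReal.ofReal_mul (by positivity), mul_left_comm,
        ← ENNReal.ofReal_mul (by positivity),
        show L / (L - 1) * ((L * T)⁻¹ * (L * T - T)) = 1 by field_simp, ENNReal.ofReal_one,
        mul_one]
    rw [hconst, hD, ENNReal.ofReal_mul (by positivity), mul_comm (ENNReal.ofReal (L ^ _)),
      mul_assoc _ _ I]
    refine mul_le_mul_right ?_ _
    rw [← lintegral_const_mul' _ _ ENNReal.ofReal_ne_top]
    refine le_trans (setLIntegral_mono' measurableSet_Ioo fun t ht => ?_)
      (lintegral_mono_set hsub)
    have ht0 : 0 < t := hT.trans ht.1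
    calc _ ≤ ENNReal.ofReal (L ^ (s * q.toReal) * t ^ (-(s * q.toReal))) *
          wLpE n p α (ballMeans n M g t) ^ q.toReal * ENNReal.ofReal t⁻¹ := by
          gcongr
          · rw [neg_mul]; exact hmon T t hT ht _ (by positivity)
          · exact hB t ht
          · exact ht.2.le
      _ = _ := by
          rw [ENNReal.ofReal_mul (by positivity)]; ring

/-- A lower bound on a set away from the unit ball, where the weight is at least `1`. -/
lemma wLpE_lower {n : ℕ} {p α : ℝ} (hp : 0 < p) (hα : 0 ≤ α)
    {F : EuclideanSpace ℝ (Fin n) → ℝ≥0∞} {U : Set (EuclideanSpace ℝ (Fin n))}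
    (hU : MeasurableSet U) (hU1 : ∀ y ∈ U, 1 ≤ ‖y‖) {b : ℝ≥0∞} (hb : ∀ y ∈ U, b ≤ F y) :
    b * volume U ^ (1 / p) ≤ wLpE n p α F := by
  unfold wLpE
  calc b * volume U ^ (1 / p) = (∫⁻ _ in U, b ^ p) ^ (1 / p) := by
        rw [setLIntegral_const, ENNReal.mul_rpow_of_nonneg _ _ (by positivity), ← ENNReal.rpow_mul,
          mul_one_div_cancel hp.ne', ENNReal.rpow_one]
    _ ≤ _ := by
        refine ENNReal.rpow_le_rpow ?_ (by positivity)
        refine le_trans (setLIntegral_mono' hU fun y hy => ?_) (setLIntegral_le_lintegral U _)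
        have h1 : (1 : ℝ≥0∞) ≤ (‖y‖₊ : ℝ≥0∞) ^ α := by
          rw [← ENNReal.one_rpow α]
          refine ENNReal.rpow_le_rpow ?_ hα
          exact_mod_cast hU1 y hy
        calc b ^ p = b ^ p * 1 := (mul_one _).symm
          _ ≤ _ := by
            gcongr
            exact hb y hy

/-- Lower bounds `c` for the differences of the rescaled functions `g (r • ·)`, on a set `U` of base
points of measure at least `m`, a set `V` of directions of measure at least `w` and a window
`(v, L v)` of steps, are controlled by the finite Besov norm of `g`, with a constant `K` depending
on `g` and `L` only. -/
lemma rescaled_lower {n M : ℕ} {p α s : ℝ} {q : ℝ≥0∞} (hp : 1 < p) (hα : 0 ≤ α) (hq : 1 ≤ q)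
    (hs : 0 < s) {g : EuclideanSpace ℝ (Fin n) → ℝ} (hg : besovNorm n p α s q M g < ∞) {L : ℝ}
    (hL : 1 < L) :
    ∃ K : ℝ, ∀ r v c w m : ℝ, 0 < r → 0 < v → L * (r * v) < 1 → 0 ≤ c → 0 ≤ w → 0 ≤ m →
      ∀ U V : Set (EuclideanSpace ℝ (Fin n)), MeasurableSet U → MeasurableSet V →
      (∀ y ∈ U, 1 ≤ ‖y‖) → (∀ h ∈ V, ‖h‖ ≤ 1) →
      ENNReal.ofReal m ≤ volume U → ENNReal.ofReal w ≤ volume V →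
      (∀ u ∈ Set.Ioo v (L * v), ∀ y ∈ U, ∀ h ∈ V,
        c ≤ |iterDiff n M (fun y => g (r • y)) (u • h) y|) →
      (r * v) ^ (-s) * r ^ ((n + α) / p) * (c * w * m ^ (1 / p)) ≤ K := by
  have hp0 : 0 < p := by linarith
  obtain ⟨K, hK, hKb⟩ := besov_window hq hs hg hL
  refine ⟨K.toReal, ?_⟩
  intro r v c w m hr hv hLrv hc hw hm U V hU hV hU1 hV1 hmU hwV hdiff
  rw [← ENNReal.ofReal_le_iff_le_toReal hK, mul_assoc, ENNReal.ofReal_mul (by positivity)]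
  refine hKb (r * v) (by positivity) hLrv _ fun t ht => ?_
  have hu : r⁻¹ * t ∈ Set.Ioo v (L * v) := by
    constructor
    · rw [lt_inv_mul_iff₀ hr]; exact ht.1
    · rw [inv_mul_lt_iff₀ hr]; linarith [ht.2]
  have e1 : ballMeans n M g t
      = fun x => ballMeans n M (fun y => g (r • y)) (r⁻¹ * t) (r⁻¹ • x) := by
    funext x
    have := ballMeans_scale n M (fun y => g (r • y)) 1 r t x
    simpa [smul_smul, hr.ne'] using this
  rw [e1, wLpE_scale hp0 hα hr (ballMeans n M (fun y => g (r • y)) (r⁻¹ * t)),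
    ENNReal.ofReal_mul (by positivity)]
  gcongr
  have hlow := wLpE_lower hp0 hα (F := ballMeans n M (fun y => g (r • y)) (r⁻¹ * t)) hU hU1
    (b := ENNReal.ofReal c * ENNReal.ofReal w) fun y hy => by
      calc ENNReal.ofReal c * ENNReal.ofReal w ≤ ENNReal.ofReal c * volume V := by gcongr
        _ = ∫⁻ _ in V, ENNReal.ofReal c := (setLIntegral_const _ _).symm
        _ ≤ ∫⁻ h in V, (‖iterDiff n M (fun y => g (r • y)) ((r⁻¹ * t) • h) y‖₊ : ℝ≥0∞) := by
          refine setLIntegral_mono' hV fun h hh => ?_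
          rw [← enorm_eq_nnnorm, ← ofReal_norm]
          exact ENNReal.ofReal_le_ofReal (hdiff _ hu y hy h hh)
        _ ≤ _ := lintegral_mono_set fun h hh => hV1 h hh
  refine le_trans ?_ hlow
  rw [ENNReal.ofReal_mul (by positivity), ENNReal.ofReal_mul hc,
    ← ENNReal.ofReal_rpow_of_nonneg hm (by positivity)]
  gcongr

lemma tendsto_pow_rpow {ρ e : ℝ} (hρ0 : 0 < ρ) (hρ1 : ρ < 1) (he : e < 0) :
    Tendsto (fun j : ℕ => (ρ ^ j) ^ e) atTop atTop := by
  have h1 : ∀ j : ℕ, (ρ ^ j) ^ e = (ρ ^ e) ^ j := fun j => by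
    rw [← Real.rpow_natCast, ← Real.rpow_natCast, ← Real.rpow_mul hρ0.le, ← Real.rpow_mul hρ0.le,
      mul_comm]
  simp_rw [h1]
  exact tendsto_pow_atTop_atTop_of_one_lt
    (Real.one_lt_rpow_of_pos_of_lt_one_of_neg hρ0 hρ1 he)

lemma not_eventually_le {ρ e c K : ℝ} (hρ0 : 0 < ρ) (hρ1 : ρ < 1) (he : e < 0) (hc : 0 < c) :
    ¬ ∀ᶠ j : ℕ in atTop, c * (ρ ^ j) ^ e ≤ K := by
  intro h
  have h2 := ((tendsto_pow_rpow hρ0 hρ1 he).const_mul_atTop hc).eventually_gt_atTop K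
  obtain ⟨j, h3, h4⟩ := (h.and h2).exists
  linarith

/-- Nonzero constants are not in the weighted `L^p` space, since `volume` is infinite outside the
unit ball. -/
lemma apply_zero_eq_zero {n M : ℕ} (hn : 1 ≤ n) {p α s : ℝ} {q : ℝ≥0∞} (hp : 1 < p) (hα : 0 ≤ α)
    (c : ℝ) (h : besovNorm n p α s q M (fun _ => c) < ∞) : c = 0 := by
  by_contra hc
  have hp0 : 0 < p := by linarith
  have h1 : wLp n p α (fun _ => c) < ∞ := (ENNReal.add_lt_top.1 h).1
  have : Nonempty (Fin n) := ⟨⟨0, hn⟩⟩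
  have hU : volume (Metric.ball (0 : EuclideanSpace ℝ (Fin n)) 1)ᶜ = ∞ := by
    have := measure_univ_of_isAddLeftInvariant (volume : Measure (EuclideanSpace ℝ (Fin n)))
    rw [← Set.union_compl_self (Metric.ball (0 : EuclideanSpace ℝ (Fin n)) 1)] at this
    have h2 := measure_union_le (μ := volume) (Metric.ball (0 : EuclideanSpace ℝ (Fin n)) 1)
      (Metric.ball (0 : EuclideanSpace ℝ (Fin n)) 1)ᶜ
    rw [this, top_le_iff, ENNReal.add_eq_top] at h2
    exact h2.resolve_left measure_ball_lt_top.ne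
  have h3 := wLpE_lower hp0 hα (F := fun _ => (‖c‖₊ : ℝ≥0∞)) (b := (‖c‖₊ : ℝ≥0∞))
    (measurableSet_ball (x := (0 : EuclideanSpace ℝ (Fin n))) (ε := 1)).compl
    (fun y hy => by simpa using hy) (fun _ _ => le_rfl)
  rw [hU, ENNReal.top_rpow_of_pos (by positivity), ENNReal.mul_top (by simpa using hc)] at h3
  exact absurd h1 (not_lt.2 h3)

/-! ### Compositions with functions that are not polynomials -/

lemma volume_box {n : ℕ} (c d : Fin n → ℝ) (hd : ∀ i, 0 ≤ d i) :
    volume {y : EuclideanSpace ℝ (Fin n) | ∀ i, |y i - c i| < d i}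
      = ENNReal.ofReal (∏ i, (2 * d i)) := by
  have hset : {y : EuclideanSpace ℝ (Fin n) | ∀ i, |y i - c i| < d i}
      = WithLp.ofLp ⁻¹' (Set.univ.pi fun i => Set.Ioo (c i - d i) (c i + d i)) := by
    ext y
    simp only [Set.mem_ofPred_eq, Set.mem_preimage, Set.mem_pi, Set.mem_univ, true_implies,
      Set.mem_Ioo, abs_lt]
    refine forall_congr' fun i => ?_
    constructor <;> rintro ⟨h1, h2⟩ <;> constructor <;> linarith
  rw [hset, (PiLp.volume_preserving_ofLp (Fin n)).measure_preimage
    (MeasurableSet.univ_pi fun i => measurableSet_Ioo).nullMeasurableSet, Real.volume_pi_Ioo,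
    ENNReal.ofReal_prod_of_nonneg fun i _ => by linarith [hd i]]
  refine Finset.prod_congr rfl fun i _ => ?_
  congr 1
  ring

lemma norm_le_of_coord {n : ℕ} (hn : 1 ≤ n) {x : EuclideanSpace ℝ (Fin n)}
    (hx : ∀ i, |x i| ≤ 1 / (4 * n)) : ‖x‖ ≤ 1 / 4 := by
  have hn' : (1 : ℝ) ≤ n := by exact_mod_cast hn
  refine abs_le_of_sq_le_sq' ?_ (by norm_num) |>.2
  rw [EuclideanSpace.real_norm_sq_eq]
  calc ∑ i, x i ^ 2 ≤ ∑ _i : Fin n, (1 / (4 * n : ℝ)) ^ 2 := by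
        refine Finset.sum_le_sum fun i _ => ?_
        rw [← sq_abs]
        exact pow_le_pow_left₀ (abs_nonneg _) (hx i) 2
    _ = 1 / (16 * n) := by
        rw [Finset.sum_const, Finset.card_univ, Fintype.card_fin, nsmul_eq_mul]
        field_simp
        norm_num
    _ ≤ (1 / 4) ^ 2 := by
        rw [div_le_iff₀ (by positivity)]; linarith

/-- If some `M`-th difference of `G` does not vanish, the Besov norm of the composition is infinite:
on the steep linear piece `a (y i0 - 2)` of the rescaled test function this difference of `G`
reappears, with step about `2 τ / a`, on a slab of width about `1 / a`. -/
lemma nonpolynomial_contradiction {n M : ℕ} {p α s : ℝ} {q : ℝ≥0∞} (hn : 1 ≤ n) (hp : 1 < p)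
    (hα : 0 ≤ α) (hq : 1 ≤ q) (hs : 0 < s) {g : EuclideanSpace ℝ (Fin n) → ℝ}
    (hg : besovNorm n p α s q M g < ∞) {ρ β : ℝ} (hρ0 : 0 < ρ) (hρ1 : ρ < 1) (hβ : 0 < β)
    (hexp : (n + α) / p - s - β * (s - 1 / p) < 0) (i0 : Fin n) {G : ℝ → ℝ} (hG : Continuous G)
    (hgeq : ∀ (j : ℕ) (z : EuclideanSpace ℝ (Fin n)), ‖z - EuclideanSpace.single i0 2‖ ≤ 1 / 2 →
      g ((ρ ^ j) • z) = G ((ρ ^ j) ^ (-β) * (z i0 - 2)))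
    {τ y0 : ℝ} (hτ : 0 < τ) (hne : (fwdDiff τ)^[M] G y0 ≠ 0) : False := by
  have hp0 : 0 < p := by linarith
  have hn' : (1 : ℝ) ≤ n := by exact_mod_cast hn
  -- `D (b, k, η)` is the `M`-th difference of `G` at `η` with step `b * k`; here `b` stands for `a u`,
  -- `k` for a coordinate of the direction `h`, and `η` for `a (y i0 - 2)`
  set D : ℝ × ℝ × ℝ → ℝ := fun x => ∑ i ∈ Finset.range (M + 1),
    (-1 : ℝ) ^ (M - i) * (M.choose i : ℝ) * G (x.2.2 + i * (x.1 * x.2.1)) with hD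
  have hDc : Continuous D := by fun_prop
  have hD0 : D (2 * τ, 1 / 2, y0) ≠ 0 := by
    convert hne using 1
    rw [fwdDiff_iter_eq_sum_shift]
    refine Finset.sum_congr rfl fun i _ => ?_
    simp only [nsmul_eq_mul, zsmul_eq_mul]
    push_cast
    congr 2
    ring
  set c0 := |D (2 * τ, 1 / 2, y0)| / 2 with hc0
  have hc0p : 0 < c0 := by positivity
  have hnhds : ∀ᶠ x in 𝓝 (2 * τ, 1 / 2, y0), c0 < |D x| :=
    (hDc.abs.tendsto _).eventually_const_lt (by rw [hc0]; linarith [abs_pos.2 hD0])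
  obtain ⟨ε', hε'0, hε'⟩ := Metric.eventually_nhds_iff.1 hnhds
  obtain ⟨ε, hε0, hεle, hε4⟩ : ∃ ε : ℝ, 0 < ε ∧ ε ≤ ε' ∧ ε ≤ 1 / 4 :=
    ⟨min ε' (1 / 4), by positivity, min_le_left _ _, min_le_right _ _⟩
  have hDlow : ∀ b k η : ℝ, |b - 2 * τ| < ε → |k - 1 / 2| < ε → |η - y0| < ε →
      c0 ≤ |D (b, k, η)| := by
    intro b k η h1 h2 h3
    refine (hε' ?_).le
    rw [Prod.dist_eq, Prod.dist_eq, max_lt_iff, max_lt_iff]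
    exact ⟨h1.trans_le hεle, h2.trans_le hεle, h3.trans_le hεle⟩
  set L := 1 + ε / (2 * τ) with hLdef
  have hL : 1 < L := by rw [hLdef]; linarith [show 0 < ε / (2 * τ) by positivity]
  have hLτ : L * (2 * τ) = 2 * τ + ε := by rw [hLdef]; field_simp
  obtain ⟨K, hK⟩ := rescaled_lower hp hα hq hs hg hL
  set V := Metric.ball (EuclideanSpace.single i0 (1 / 2 : ℝ)) ε with hV
  have hVtop : volume V ≠ ∞ := measure_ball_lt_top.ne
  set w := (volume V).toReal with hw
  have hwp : 0 < w := ENNReal.toReal_pos (Metric.measure_ball_pos _ _ hε0).ne' hVtop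
  set m := 2 * ε * (1 / (2 * n : ℝ)) ^ (n - 1) with hm
  have hmp : 0 < m := by positivity
  have hVn : ∀ h ∈ V, ‖h‖ ≤ 1 := fun h hh => by
    have h1 : ‖h - EuclideanSpace.single i0 (1 / 2 : ℝ)‖ < ε := by
      simpa [hV, dist_eq_norm] using hh
    have h2 := norm_le_norm_add_norm_sub' h (EuclideanSpace.single i0 (1 / 2 : ℝ))
    have h3 : ‖EuclideanSpace.single i0 (1 / 2 : ℝ)‖ = 1 / 2 := by simp
    linarith
  have hVc : ∀ h ∈ V, |h i0 - 1 / 2| < ε := fun h hh => by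
    have h1 : ‖h - EuclideanSpace.single i0 (1 / 2 : ℝ)‖ < ε := by
      simpa [hV, dist_eq_norm] using hh
    have h2 := PiLp.norm_apply_le (h - EuclideanSpace.single i0 (1 / 2 : ℝ)) i0
    simp only [PiLp.sub_apply, PiLp.single_apply, if_true, Real.norm_eq_abs] at h2
    linarith
  refine not_eventually_le (K := K) hρ0 hρ1 hexp
    (show 0 < (2 * τ) ^ (-s) * c0 * w * m ^ (1 / p) by positivity) ?_
  have hat : Tendsto (fun j : ℕ => (ρ ^ j) ^ (-β)) atTop atTop :=
    tendsto_pow_rpow hρ0 hρ1 (by linarith)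
  filter_upwards [hat.eventually_ge_atTop ((|y0| + ε) * (4 * n)),
    hat.eventually_ge_atTop (4 * M * (2 * τ + ε)), hat.eventually_gt_atTop (2 * τ + ε)]
    with j ha1 ha2 ha3
  set r := ρ ^ j with hr
  have hr0 : 0 < r := by positivity
  have hr1 : r ≤ 1 := pow_le_one₀ hρ0.le hρ1.le
  set a := r ^ (-β) with ha
  have ha0 : 0 < a := by positivity
  have hainv : r ^ β = a⁻¹ := by rw [ha, Real.rpow_neg hr0.le, inv_inv]
  -- the slab `U`: width `2 ε / a` in the direction `i0`, fixed width in the others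
  set cc : Fin n → ℝ := fun i => if i = i0 then 2 + y0 / a else 0 with hcc
  set dd : Fin n → ℝ := fun i => if i = i0 then ε / a else 1 / (4 * n) with hdd
  set U := {y : EuclideanSpace ℝ (Fin n) | ∀ i, |y i - cc i| < dd i} with hU
  have hUvol : volume U = ENNReal.ofReal (m * a⁻¹) := by
    rw [hU, volume_box cc dd fun i => by simp only [hdd]; split_ifs <;> positivity]
    congr 1
    rw [← Finset.mul_prod_erase _ _ (Finset.mem_univ i0), Finset.prod_congr rfl
      (g := fun _ => 1 / (2 * n : ℝ)) fun i hi => by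
        simp only [hdd, if_neg (Finset.ne_of_mem_erase hi)]; field_simp; norm_num]
    simp only [hdd, if_true, Finset.prod_const, Finset.card_erase_of_mem (Finset.mem_univ i0),
      Finset.card_univ, Fintype.card_fin, hm]
    ring
  have hUmeas : MeasurableSet U := by
    rw [hU, Set.ofPred_forall]
    refine MeasurableSet.iInter fun i => ?_
    exact measurableSet_lt (by fun_prop) (by fun_prop)
  have hU0 : ∀ y ∈ U, |a * (y i0 - 2) - y0| < ε := fun y hy => by
    have h1 := hy i0
    simp only [hcc, hdd, if_true] at h1
    have h2 : a * (y i0 - 2) - y0 = a * (y i0 - (2 + y0 / a)) := by field_simp; ring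
    rw [h2, abs_mul, abs_of_pos ha0]
    calc a * |y i0 - (2 + y0 / a)| < a * (ε / a) := by gcongr
      _ = ε := by field_simp
  have hUn : ∀ y ∈ U, ‖y - EuclideanSpace.single i0 2‖ ≤ 1 / 4 := fun y hy => by
    refine norm_le_of_coord hn fun i => ?_
    by_cases hi : i = i0
    · subst hi
      have h1 := hU0 y hy
      have h2 : |a * (y i - 2)| ≤ |y0| + ε := by
        have := abs_add_le (a * (y i - 2) - y0) y0
        rw [sub_add_cancel] at this
        linarith
      rw [abs_mul, abs_of_pos ha0] at h2
      simp only [PiLp.sub_apply, PiLp.single_apply, if_true]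
      rw [le_div_iff₀ (by positivity)]
      have h3 : a * (|y i - 2| * (4 * n)) ≤ a * 1 := by
        calc a * (|y i - 2| * (4 * n)) = a * |y i - 2| * (4 * n) := by ring
          _ ≤ (|y0| + ε) * (4 * n) := by gcongr
          _ ≤ a * 1 := by linarith
      exact le_of_mul_le_mul_left h3 ha0
    · have h1 := hy i
      simp only [hcc, hdd, if_neg hi, sub_zero] at h1
      simp only [PiLp.sub_apply, PiLp.single_apply, if_neg hi, sub_zero]
      exact h1.le
  have key := hK r (2 * τ * a⁻¹) c0 w (m * a⁻¹) hr0 (by positivity) ?_ hc0p.le hwp.le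
    (by positivity) U V hUmeas measurableSet_ball ?_ hVn hUvol.ge
    (ENNReal.ofReal_toReal hVtop).le ?_
  · refine le_trans (le_of_eq ?_) key
    rw [← hainv, Real.mul_rpow hr0.le (by positivity),
      Real.mul_rpow (x := 2 * τ) (y := r ^ β) (by positivity) (by positivity),
      Real.mul_rpow hmp.le (by positivity), ← Real.rpow_mul hr0.le, ← Real.rpow_mul hr0.le,
      show (n + α) / p - s - β * (s - 1 / p)
        = -s + β * (-s) + (n + α) / p + β * (1 / p) by ring,
      Real.rpow_add hr0, Real.rpow_add hr0, Real.rpow_add hr0]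
    ring
  · calc L * (r * (2 * τ * a⁻¹)) = r * ((2 * τ + ε) * a⁻¹) := by rw [← hLτ]; ring
      _ ≤ 1 * ((2 * τ + ε) * a⁻¹) := by gcongr
      _ < 1 := by rw [one_mul, ← div_eq_mul_inv, div_lt_one ha0]; exact ha3
  · intro y hy
    have h1 := hUn y hy
    have h2 := norm_le_norm_add_norm_sub (EuclideanSpace.single i0 (2 : ℝ)) y
    have h2' := norm_sub_rev (EuclideanSpace.single i0 (2 : ℝ)) y
    have h3 : ‖EuclideanSpace.single i0 (2 : ℝ)‖ = 2 := by simp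
    have h4 := norm_sub_norm_le (EuclideanSpace.single i0 (2 : ℝ)) y
    linarith
  · intro u hu y hy h hh
    have hu0 : 0 < u := lt_trans (by positivity) hu.1
    have hau : |a * u - 2 * τ| < ε := by
      have h1 : 2 * τ < a * u := by
        have := hu.1
        rw [← div_eq_mul_inv, div_lt_iff₀ ha0] at this
        linarith
      have h2 : a * u < 2 * τ + ε := by
        have := hu.2
        rw [← mul_assoc, hLτ, ← div_eq_mul_inv, lt_div_iff₀ ha0] at this
        linarith
      rw [abs_lt]; constructor <;> linarith
    convert hDlow (a * u) (h i0) (a * (y i0 - 2)) hau (hVc h hh) (hU0 y hy) using 2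
    unfold iterDiff
    simp only [hD]
    refine Finset.sum_congr rfl fun i hi => ?_
    rw [hgeq j]
    · congr 2
      simp only [PiLp.add_apply, PiLp.smul_apply, smul_eq_mul]
      ring
    · have hiM : (i : ℝ) ≤ M := by
        exact_mod_cast Nat.lt_succ_iff.1 (Finset.mem_range.1 hi)
      have h1 : ‖(i : ℝ) • u • h‖ ≤ 1 / 4 := by
        rw [norm_smul, norm_smul, Real.norm_of_nonneg (Nat.cast_nonneg i),
          Real.norm_of_nonneg hu0.le]
        have h2 : u ≤ (2 * τ + ε) * a⁻¹ := by
          have := hu.2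
          rw [← mul_assoc, hLτ] at this
          exact this.le
        calc (i : ℝ) * (u * ‖h‖) ≤ M * ((2 * τ + ε) * a⁻¹ * 1) := by
              gcongr
              exact hVn h hh
          _ ≤ 1 / 4 := by
              rw [mul_one, ← div_eq_mul_inv, mul_div_assoc', div_le_iff₀ ha0]; linarith
      have h2 := norm_add_le (y - EuclideanSpace.single i0 2) ((i : ℝ) • u • h)
      have h3 := hUn y hy
      rw [add_sub_right_comm]
      linarith

/-! ### Compositions with functions of quadratic growth -/

/-- If `|G|` grows at least quadratically, the Besov norm of the composition is infinite: an `M`-th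
difference of the rescaled composition that meets the bump in its last point only has size at least
a multiple of `a ^ 2`, where `a` is the amplitude of the bump. -/
lemma quadratic_contradiction {n M : ℕ} {p α s : ℝ} {q : ℝ≥0∞} (hp : 1 < p)
    (hα : 0 ≤ α) (hq : 1 ≤ q) (hs : 0 < s) {g : EuclideanSpace ℝ (Fin n) → ℝ}
    (hg : besovNorm n p α s q M g < ∞) {ρ β : ℝ} (hρ0 : 0 < ρ) (hρ1 : ρ < 1)
    (hρM : ρ⁻¹ = 4 * M + 4) (hβ : 0 < β)
    (hexp : (n + α) / p - s - 2 * β < 0) (i0 : Fin n) {G : ℝ → ℝ}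
    (hgeq : ∀ (j : ℕ) (z : EuclideanSpace ℝ (Fin n)), ‖z - EuclideanSpace.single i0 2‖ ≤ 1 / 2 →
      g ((ρ ^ j) • z) = G ((ρ ^ j) ^ (-β) * (z i0 - 2)))
    (hgzero : ∀ (j : ℕ) (z : EuclideanSpace ℝ (Fin n)), 3 ≤ ‖z‖ → ‖z‖ ≤ ρ⁻¹ →
      g ((ρ ^ j) • z) = 0)
    {c1 Y : ℝ} (hc1 : 0 < c1) (hY : ∀ y, Y ≤ y → c1 * y ^ 2 ≤ |G y|) : False := by
  have hp0 : 0 < p := by linarith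
  set e : ℝ → EuclideanSpace ℝ (Fin n) := fun t => EuclideanSpace.single i0 t with he
  have hcomb : ∀ i : ℕ, e (9 / 4 + 4 * M) + (i : ℝ) • (8 : ℝ) • e (-1 / 2)
      = e (9 / 4 + 4 * ((M : ℝ) - i)) := by
    intro i
    ext k
    simp only [he, PiLp.add_apply, PiLp.smul_apply, PiLp.single_apply, smul_eq_mul]
    split_ifs <;> ring
  have hcoord : ∀ t, e t i0 = t := fun t => by simp [he]
  have hnorm : ∀ t, ‖e t‖ = |t| := fun t => by simp [he]
  -- the progression `9/4 + 4 (M - i)`, `i ≤ M`, along the axis `i0`: only its last point `9/4` lies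
  -- in the bump, the others lie between the bump and the next copy
  have hev : ∀ᶠ x : EuclideanSpace ℝ (Fin n) × EuclideanSpace ℝ (Fin n) × ℝ in
      𝓝 (e (9 / 4 + 4 * M), e (-1 / 2), 8),
      (∀ i ∈ Finset.range M, 3 < ‖x.1 + (i : ℝ) • x.2.2 • x.2.1‖ ∧
        ‖x.1 + (i : ℝ) • x.2.2 • x.2.1‖ < ρ⁻¹) ∧
      ‖x.1 + (M : ℝ) • x.2.2 • x.2.1 - e 2‖ < 1 / 2 ∧
      1 / 8 < (x.1 + (M : ℝ) • x.2.2 • x.2.1) i0 - 2 ∧ ‖x.2.1‖ < 1 ∧ 1 < ‖x.1‖ := by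
    have hc : ∀ i : ℕ, Continuous fun x : EuclideanSpace ℝ (Fin n) × EuclideanSpace ℝ (Fin n) × ℝ =>
      x.1 + (i : ℝ) • x.2.2 • x.2.1 := fun i => by fun_prop
    refine Filter.Eventually.and ?_ (Filter.Eventually.and ?_ (Filter.Eventually.and ?_
      (Filter.Eventually.and ?_ ?_)))
    · rw [Filter.eventually_all_finset]
      intro i hi
      have hiM : (i : ℝ) + 1 ≤ M := by exact_mod_cast Finset.mem_range.1 hi
      have hi0 : (0 : ℝ) ≤ i := Nat.cast_nonneg i
      have hpos : (0 : ℝ) ≤ 9 / 4 + 4 * ((M : ℝ) - i) := by linarith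
      refine Filter.Eventually.and ?_ ?_
      · refine ((hc i).norm.tendsto _).eventually_const_lt ?_
        simp only [hcomb, hnorm, abs_of_nonneg hpos]
        linarith
      · refine ((hc i).norm.tendsto _).eventually_lt_const ?_
        simp only [hcomb, hnorm, abs_of_nonneg hpos, hρM]
        linarith
    · have hc1 : Continuous fun x : EuclideanSpace ℝ (Fin n) × EuclideanSpace ℝ (Fin n) × ℝ =>
        ‖x.1 + (M : ℝ) • x.2.2 • x.2.1 - e 2‖ := by fun_prop
      refine (hc1.tendsto _).eventually_lt_const ?_
      simp only [hcomb]
      have : e (9 / 4 + 4 * ((M : ℝ) - M)) - e 2 = e (1 / 4) := by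
        ext k
        simp only [he, PiLp.sub_apply, PiLp.single_apply]
        split_ifs <;> ring
      rw [this, hnorm, abs_of_pos] <;> norm_num
    · have hc2 : Continuous fun x : EuclideanSpace ℝ (Fin n) × EuclideanSpace ℝ (Fin n) × ℝ =>
        (x.1 + (M : ℝ) • x.2.2 • x.2.1) i0 - 2 := by fun_prop
      refine (hc2.tendsto _).eventually_const_lt ?_
      simp only [hcomb, hcoord]
      norm_num
    · have hc3 : Continuous fun x : EuclideanSpace ℝ (Fin n) × EuclideanSpace ℝ (Fin n) × ℝ =>
        ‖x.2.1‖ := by fun_prop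
      refine (hc3.tendsto _).eventually_lt_const ?_
      rw [hnorm, abs_lt]; constructor <;> norm_num
    · have hc4 : Continuous fun x : EuclideanSpace ℝ (Fin n) × EuclideanSpace ℝ (Fin n) × ℝ =>
        ‖x.1‖ := by fun_prop
      refine (hc4.tendsto _).eventually_const_lt ?_
      have hM0 : (0 : ℝ) ≤ M := Nat.cast_nonneg M
      rw [hnorm, abs_of_nonneg] <;> linarith
  obtain ⟨ε, hε0, hε⟩ := Metric.eventually_nhds_iff.1 hev
  have hgood : ∀ y ∈ Metric.ball (e (9 / 4 + 4 * M)) ε, ∀ h ∈ Metric.ball (e (-1 / 2)) ε,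
      ∀ u ∈ Set.Ico (8 : ℝ) (8 + ε), _ := fun y hy h hh u hu => @hε (y, h, u) (by
    rw [Prod.dist_eq, Prod.dist_eq, max_lt_iff, max_lt_iff]
    refine ⟨hy, hh, ?_⟩
    rw [Real.dist_eq, abs_lt]
    constructor <;> linarith [hu.1, hu.2])
  have h8 : (8 : ℝ) ∈ Set.Ico (8 : ℝ) (8 + ε) := ⟨le_rfl, by linarith⟩
  set L := 1 + ε / 8 with hLdef
  have hL : 1 < L := by rw [hLdef]; linarith
  obtain ⟨K, hK⟩ := rescaled_lower hp hα hq hs hg hL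
  set U := Metric.ball (e (9 / 4 + 4 * M)) ε with hU
  set V := Metric.ball (e (-1 / 2)) ε with hV
  have hUtop : volume U ≠ ∞ := measure_ball_lt_top.ne
  have hVtop : volume V ≠ ∞ := measure_ball_lt_top.ne
  set m := (volume U).toReal with hm
  set w := (volume V).toReal with hw
  have hmp : 0 < m := ENNReal.toReal_pos (Metric.measure_ball_pos _ _ hε0).ne' hUtop
  have hwp : 0 < w := ENNReal.toReal_pos (Metric.measure_ball_pos _ _ hε0).ne' hVtop
  refine not_eventually_le (K := K) hρ0 hρ1 hexp
    (show 0 < (8 : ℝ) ^ (-s) * (c1 / 64) * w * m ^ (1 / p) by positivity) ?_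
  have hat : Tendsto (fun j : ℕ => (ρ ^ j) ^ (-β)) atTop atTop :=
    tendsto_pow_rpow hρ0 hρ1 (by linarith)
  have hrt : Tendsto (fun j : ℕ => ρ ^ j) atTop (𝓝 0) :=
    tendsto_pow_atTop_nhds_zero_of_lt_one hρ0.le hρ1
  filter_upwards [hat.eventually_ge_atTop (8 * Y), hrt.eventually_lt_const
    (show (0 : ℝ) < 1 / (8 + ε) by positivity)] with j ha1 hrs
  set r := ρ ^ j with hr
  have hr0 : 0 < r := by positivity
  set a := r ^ (-β) with ha
  have ha0 : 0 < a := by positivity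
  have key := hK r 8 (c1 / 64 * a ^ 2) w m hr0 (by norm_num) ?_ (by positivity) hwp.le hmp.le U V
    measurableSet_ball measurableSet_ball
    (fun y hy => (hgood y hy _ (Metric.mem_ball_self hε0) 8 h8).2.2.2.2.le)
    (fun h hh => (hgood _ (Metric.mem_ball_self hε0) h hh 8 h8).2.2.2.1.le)
    (ENNReal.ofReal_toReal hUtop).le (ENNReal.ofReal_toReal hVtop).le ?_
  · refine le_trans (le_of_eq ?_) key
    rw [ha, ← Real.rpow_mul_natCast hr0.le, Real.mul_rpow hr0.le (by norm_num),
      show (n + α) / p - s - 2 * β = -s + (n + α) / p + -β * (2 : ℕ) by push_cast; ring,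
      Real.rpow_add hr0, Real.rpow_add hr0]
    ring
  · rw [lt_div_iff₀ (by positivity)] at hrs
    calc L * (r * 8) = r * (8 + ε) := by rw [hLdef]; ring
      _ < 1 := hrs
  · intro u hu y hy h hh
    obtain ⟨h1, h2, h3, -, -⟩ := hgood y hy h hh u ⟨hu.1.le, by
      have := hu.2
      rw [hLdef] at this
      linarith⟩
    dsimp only at h1 h2 h3
    unfold iterDiff
    dsimp only
    rw [Finset.sum_range_succ, Finset.sum_eq_zero fun i hi => by
      rw [hgzero j _ (h1 i hi).1.le (h1 i hi).2.le, mul_zero], hgeq j _ h2.le]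
    simp only [tsub_self, pow_zero, Nat.choose_self, Nat.cast_one, one_mul, zero_add]
    set b := (y + (M : ℝ) • u • h) i0 - 2 with hb
    have hab : a / 8 ≤ a * b := by
      calc a / 8 = a * (1 / 8) := by ring
        _ ≤ a * b := by gcongr
    calc c1 / 64 * a ^ 2 = c1 * (a / 8) ^ 2 := by ring
      _ ≤ c1 * (a * b) ^ 2 := by gcongr
      _ ≤ |G (a * b)| := hY _ (by linarith)

/-! ### Linearity of the outer function -/

lemma iterDiff_zero (n M : ℕ) (h x : EuclideanSpace ℝ (Fin n)) :
    iterDiff n M (fun _ => 0) h x = 0 := by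
  simp [iterDiff]

lemma memBesov_zero {n M : ℕ} {p α s : ℝ} {q : ℝ≥0∞} (hp : 1 < p) (hq : 1 ≤ q) :
    MemBesov n p α s q M (fun _ => 0) := by
  have hp0 : 0 < p := by linarith
  have h0 : wLpE n p α (fun _ => 0) = 0 := by
    simp [wLpE, ENNReal.zero_rpow_of_pos hp0, hp0]
  refine memBesov_of_bound (σ := s + 1) (K := 0) hq (by linarith) measurable_const ?_
    (by simp) fun t _ => ?_
  · simp [wLp, h0]
  · have : ballMeans n M (fun _ => 0) t = fun _ => 0 := by
      funext x
      simp [ballMeans, iterDiff_zero]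
    simp [this, h0]

lemma quadratic_growth (P : Polynomial ℝ) (hP : 2 ≤ P.natDegree) :
    ∃ c Y : ℝ, 0 < c ∧ ∀ y, Y ≤ y → c * y ^ 2 ≤ |P.eval y| := by
  have h1 : (Polynomial.X ^ 2 : Polynomial ℝ).degree ≤ P.degree := by
    rw [Polynomial.degree_X_pow]
    have hne : P ≠ 0 := by rintro rfl; simp at hP
    rw [Polynomial.degree_eq_natDegree hne]
    exact_mod_cast hP
  obtain ⟨C, hC, hb⟩ := (Polynomial.isBigO_atTop_of_degree_le _ _ h1).exists_pos
  obtain ⟨Y, hY⟩ := eventually_atTop.1 hb.bound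
  refine ⟨C⁻¹, Y, by positivity, fun y hy => ?_⟩
  have := hY y hy
  rw [inv_mul_le_iff₀ hC]
  simpa using this

/-- Degeneracy of composition operators on weighted Besov spaces:
if `G ∘ f ∈ B^s_{p,q}(ℝ^n,|·|^α)` for every `f ∈ B^s_{p,q}(ℝ^n,|·|^α)`, with
`1 + 1/p < s < (n+α)/p`, then `G` is linear. -/
theorem composition_linear_of_maps_besov
    (n : ℕ) (hn : 1 ≤ n) (p α s : ℝ) (q : ℝ≥0∞) (M : ℕ)
    (hp : 1 < p) (hq : 1 ≤ q) (hα0 : 0 ≤ α) (hα : α < n * (p - 1))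
    (hs1 : 1 + 1 / p < s) (hs2 : s < ((n : ℝ) + α) / p) (hsM : s < (M : ℝ))
    (G : ℝ → ℝ) (hG : ContDiff ℝ 2 G)
    (hcomp : ∀ f : EuclideanSpace ℝ (Fin n) → ℝ,
      MemBesov n p α s q M f → MemBesov n p α s q M (fun x => G (f x))) :
    ∃ c : ℝ, ∀ t : ℝ, G t = c * t := by
  have hp0 : 0 < p := by linarith
  have hpinv : 0 < 1 / p := by positivity
  have hs0 : 0 < s := by linarith
  have hM0 : (0 : ℝ) < M := hs0.trans hsM
  have hG0 : G 0 = 0 :=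
    apply_zero_eq_zero hn hp hα0 (G 0) (hcomp _ (memBesov_zero hp hq)).2
  -- `β` close enough below `(n + α) / p - s` makes both exponents in the two cases negative
  obtain ⟨θ, hθ1, hθ2⟩ : ∃ θ, max (1 / (s - 1 / p)) (1 / 2) < θ ∧ θ < 1 :=
    exists_between (max_lt ((div_lt_one (by linarith)).2 (by linarith)) (by norm_num))
  obtain ⟨hθa, hθb⟩ := max_lt_iff.1 hθ1
  rw [div_lt_iff₀ (by linarith)] at hθa
  set A := ((n : ℝ) + α) / p - s with hA
  have hA0 : 0 < A := by rw [hA]; linarith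
  have hβ0 : 0 < A * θ := by positivity
  have hβA : A * θ < A := by nlinarith
  have hexp1 : (n + α) / p - s - A * θ * (s - 1 / p) < 0 := by
    rw [← hA, mul_assoc]; nlinarith
  have hexp2 : (n + α) / p - s - 2 * (A * θ) < 0 := by
    rw [← hA]; nlinarith
  set β := A * θ with hβ
  obtain ⟨σ, hσs, hσ⟩ : ∃ σ, s < σ ∧ σ < min (M : ℝ) ((n + α) / p - β) :=
    exists_between (lt_min hsM (by linarith))
  obtain ⟨hσM, hσβ⟩ := lt_min_iff.1 hσ
  set i0 : Fin n := ⟨0, hn⟩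
  obtain ⟨φ, hφ, hφc, hφs, hφlin⟩ := exists_profile n i0
  have hsupp : ∀ y, φ y ≠ 0 → 1 < ‖y‖ ∧ ‖y‖ < 3 := fun y hy => by
    have h1 := hφs y hy
    have h2 := abs_norm_sub_norm_le y (EuclideanSpace.single i0 (2 : ℝ))
    have h3 : ‖EuclideanSpace.single i0 (2 : ℝ)‖ = 2 := by simp
    rw [h3, abs_le] at h2
    constructor <;> linarith
  set ρ : ℝ := (4 * M + 4)⁻¹ with hρ
  have hρ0 : 0 < ρ := by positivity
  have hρM : ρ⁻¹ = 4 * M + 4 := by rw [hρ, inv_inv]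
  have hρ3 : 3 * ρ ≤ 1 := by
    rw [hρ, ← div_eq_mul_inv, div_le_one (by positivity)]; linarith
  have hρ1 : ρ < 1 := by linarith
  obtain ⟨C, hC, hCb⟩ := profile_bound (M := M) (σ := σ) hp hα0 hα (by linarith) hσM.le hφ hφc
    fun y hy => (hsupp y hy).2.le
  obtain ⟨K, hK, hKb⟩ := lacunary_ballMeans (M := M) (β := β) hp hα0 hφ.continuous hρ0 hρ3 hsupp
    (by linarith) hC hCb
  have hmem : MemBesov n p α s q M (lacunary n φ ρ β) :=
    memBesov_of_bound hq hσs (lacunary_measurable hφ.continuous.measurable hρ0 hρ3 hsupp)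
      (lacunary_wLp hp hα0 hφ.continuous hφc hρ0 hρ3 hsupp (by linarith)) hK hKb
  have hg := (hcomp _ hmem).2
  have hgeq : ∀ (j : ℕ) (z : EuclideanSpace ℝ (Fin n)),
      ‖z - EuclideanSpace.single i0 2‖ ≤ 1 / 2 →
      G (lacunary n φ ρ β ((ρ ^ j) • z)) = G ((ρ ^ j) ^ (-β) * (z i0 - 2)) := fun j z hz => by
    have h2 := abs_norm_sub_norm_le z (EuclideanSpace.single i0 (2 : ℝ))
    have h3 : ‖EuclideanSpace.single i0 (2 : ℝ)‖ = 2 := by simp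
    rw [h3, abs_le] at h2
    rw [lacunary_eq hρ0 hρ3 hsupp (by linarith) (by rw [hρM]; linarith), hφlin z hz]
  have hgzero : ∀ (j : ℕ) (z : EuclideanSpace ℝ (Fin n)), 3 ≤ ‖z‖ → ‖z‖ ≤ ρ⁻¹ →
      G (lacunary n φ ρ β ((ρ ^ j) • z)) = 0 := fun j z hz1 hz2 => by
    have h1 : φ z = 0 := by
      by_contra hne
      linarith [(hsupp z hne).2]
    rw [lacunary_eq hρ0 hρ3 hsupp (by linarith) hz2, h1, mul_zero, hG0]
  have hdiff : ∀ τ, 0 < τ → ∀ x, (fwdDiff τ)^[M] G x = 0 := fun τ hτ x => by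
    by_contra hne
    exact nonpolynomial_contradiction hn hp hα0 hq hs0 hg hρ0 hρ1 hβ0 hexp1 i0 hG.continuous hgeq
      hτ hne
  obtain ⟨P, hP⟩ := exists_polynomial_of_fwdDiff hG.continuous hdiff
  have hdeg : P.natDegree ≤ 1 := by
    by_contra hlt
    obtain ⟨c1, Y, hc1, hY⟩ := quadratic_growth P (by omega)
    exact quadratic_contradiction hp hα0 hq hs0 hg hρ0 hρ1 hρM hβ0 hexp2 i0 hgeq hgzero hc1
      fun y hy => (hY y hy).trans_eq (by rw [hP])
  obtain ⟨a, b, hab⟩ := Polynomial.exists_eq_X_add_C_of_natDegree_le_one hdeg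
  have hG' : ∀ t, G t = a * t + b := fun t => by rw [hP, hab]; simp
  refine ⟨a, fun t => ?_⟩
  have hb : b = 0 := by have := hG' 0; rw [hG0] at this; linarith
  rw [hG', hb, add_zero]
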